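/- arXiv:1402.5113 — 2 statements merged into one kernel-verified Lean document; each statement's English description precedes it below -/
import Mathlib

section
/- For every positive integer c there is an integer f(c) = O(c²) (one may take f(c) = 3485c²) such that if n > 10·f(c) and P is a poset with |P| ≤ 2n + 1 and dim(P) ≥ n − c, then P contains the standard example S_d as a subposet with d ≥ n − f(c). -/
/-- `x` and `y` are incomparable elements of a poset. -/
def Incomp {α : Type*} [PartialOrder α] (x y : α) : Prop := ¬ x ≤ y ∧ ¬ y ≤ x

/-- `r` is a linear extension of the partial order on `α`. -/
def IsLinearExtension {α : Type*} [PartialOrder α] (r : α → α → Prop) : Prop :=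
  IsLinearOrder α r ∧ ∀ x y : α, x ≤ y → r x y

/-- `α` admits a realizer consisting of `d` linear extensions. -/
def RealizerOfSize (α : Type*) [PartialOrder α] (d : ℕ) : Prop :=
  ∃ L : Fin d → (α → α → Prop), (∀ i, IsLinearExtension (L i)) ∧
    ∀ x y : α, x ≤ y ↔ ∀ i, L i x y

/-- The Dushnik–Miller dimension: the least positive integer `d`
for which the order is the intersection of `d` linear extensions. -/
noncomputable def dimP (α : Type*) [PartialOrder α] : ℕ :=
  sInf {d | 0 < d ∧ RealizerOfSize α d}

/-- `α` contains the standard example `S d` as an induced subposet. -/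
def ContainsStdExample (α : Type*) [PartialOrder α] (d : ℕ) : Prop :=
  ∃ a b : Fin d → α, Function.Injective a ∧ Function.Injective b ∧
    (∀ i j : Fin d, a i ≠ b j) ∧
    (∀ i j : Fin d, a i < b j ↔ i ≠ j) ∧
    (∀ i j : Fin d, i ≠ j → Incomp (a i) (a j)) ∧
    (∀ i j : Fin d, i ≠ j → Incomp (b i) (b j)) ∧
    (∀ i j : Fin d, ¬ b j ≤ a i)

/-!
Let `A` be a maximum antichain, let `D` be the set of points below it and `U` the remaining points.
By Dilworth's theorem `dim P ≤ #A`, so `#D + #U ≤ n + O(c)`, and we may assume `#D ≤ #U` by duality.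
On the other hand `dim P ≤ #D + #U + 2`, since one linear extension per point outside `A` and two
more form a realizer. As `dim P` is almost `n`, only `O(c)` of these extensions can be saved. Yet
two extensions merge into one for each pair of comparable points inside `D` or inside `U`, for each
incomparable pair of a point of `D` and a point of `U`, and, when all of `D` is below all of `U`,
for suitable triples of points of `D` and `U`. So at the cost of `O(c)` in the dimension `D` can be
discarded and `U` replaced by an antichain.

In the remaining poset of height two, König's theorem provides a matching of incomparable pairs
`(aᵢ, bᵢ)` whose size is almost the dimension, and again few extensions can be saved. This is a
condition on the reflexive digraph `R i j ↔ ¬ aᵢ ≤ bⱼ`. If all savings in `R` are at most `C`, then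
`R` has an independent set that misses only `O(C²)` indices: on a matching that covers the rest, a
digraph in which all large vertex sets have almost all vertices as out- and in-neighbours admits
more than `C` savings once it is large enough, and every other digraph falls apart into two pieces
whose savings add up. An independent set of `R` is a standard example.
-/

/-! ### Savings in reflexive relations -/

section Relation

open Finset
open scoped Classical

variable {ι κ : Type*} {R : ι → ι → Prop} {C s : ℕ}

/-- The set of out-neighbours of `J` in the digraph of the relation `R`. In-neighbours are
`outNeighbors (Function.swap R) J`. -/
noncomputable def outNeighbors [Fintype ι] (R : ι → ι → Prop) (J : Finset ι) : Finset ι :=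
  {i | ∃ j ∈ J, R j i}

lemma mem_outNeighbors [Fintype ι] {J : Finset ι} {i : ι} :
    i ∈ outNeighbors R J ↔ ∃ j ∈ J, R j i := by
  simp [outNeighbors]

lemma subset_outNeighbors [Fintype ι] (hR : ∀ i, R i i) (J : Finset ι) :
    J ⊆ outNeighbors R J :=
  fun i hi ↦ mem_outNeighbors.2 ⟨i, hi, hR i⟩

lemma exists_perm_of_equiv_sum [Finite ι] (f : ι ⊕ κ ≃ ι ⊕ κ)
    (hf : ∀ β γ, f (.inr β) ≠ .inr γ) :
    ∃ (σ : Equiv.Perm ι) (q : κ ↪ ι), (∀ i ∉ Set.range q, f (.inl i) = .inl (σ i)) ∧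
      ∀ β, f (.inl (q β)) = .inr β ∧ f (.inr β) = .inl (σ (q β)) := by
  have hleft (β) : ∃ j, f (.inr β) = .inl j := by
    rcases h : f (.inr β) with j | γ
    exacts [⟨j, rfl⟩, (hf β γ h).elim]
  have hright (β) : ∃ i, f (.inl i) = .inr β := by
    rcases h : f.symm (.inr β) with i | γ <;> rw [Equiv.symm_apply_eq] at h
    exacts [⟨i, h.symm⟩, (hf γ β h.symm).elim]
  choose g hg using hleft
  choose q hq using hright
  let contract : ι → ι := fun i ↦ Sum.elim id g (f (.inl i))
  have contract_q (β) : contract (q β) = g β := by simp [contract, hq]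
  have surj : Function.Surjective contract := fun j ↦ by
    rcases h : f.symm (.inl j) with i | β <;> rw [Equiv.symm_apply_eq] at h
    · exact ⟨i, by simp [contract, ← h]⟩
    · exact ⟨q β, by rw [contract_q]; exact Sum.inl_injective ((hg β).symm.trans h.symm)⟩
  have q_inj : Function.Injective q := fun β γ h ↦
    Sum.inr_injective ((hq β).symm.trans (h ▸ hq γ))
  refine ⟨.ofBijective contract (Finite.surjective_iff_bijective.1 surj), ⟨q, q_inj⟩,
    fun i hi ↦ ?_, fun β ↦ ⟨hq β, ?_⟩⟩
  · rcases h : f (.inl i) with j | β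
    · simp [contract, h]
    · exact (hi ⟨β, Sum.inl_injective (f.injective ((hq β).trans h.symm))⟩).elim
  · simp [contract_q, hg]

/-- The targets available to each vertex when `s` extra vertices may be visited from `Y` and
left into `Q`. -/
noncomputable def detourTargets [Fintype ι] (R : ι → ι → Prop) (Y Q : Finset ι) (s : ℕ) :
    ι ⊕ Fin s → Finset (ι ⊕ Fin s) :=
  Sum.elim (fun i ↦ ({j | R i j} : Finset ι).disjSum (if i ∈ Y then univ else ∅))
    fun _ ↦ Q.disjSum ∅

lemma card_le_card_biUnion_detourTargets [Fintype ι] (hR : ∀ i, R i i) {Y Q : Finset ι}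
    (h : ∀ X, Disjoint X Y → #X + s ≤ #(outNeighbors R X ∪ Q)) (X : Finset (ι ⊕ Fin s)) :
    #X ≤ #(X.biUnion (detourTargets R Y Q s)) := by
  have hright : #X.toRight ≤ s := by simpa using card_le_univ X.toRight
  have hleft : #X.toLeft ≤ #(outNeighbors R X.toLeft) := card_le_card (subset_outNeighbors hR _)
  have bound {P : Finset ι} {K : Finset (Fin s)}
      (hPK : P.disjSum K ⊆ X.biUnion (detourTargets R Y Q s)) :
      #P + #K ≤ #(X.biUnion (detourTargets R Y Q s)) := by
    rw [← card_disjSum]; exact card_le_card hPK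
  have inl_mem {j} (hj : j ∈ outNeighbors R X.toLeft) :
      .inl j ∈ X.biUnion (detourTargets R Y Q s) := by
    obtain ⟨i, hi, hij⟩ := mem_outNeighbors.1 hj
    exact mem_biUnion.2 ⟨.inl i, mem_toLeft.1 hi, by simp [detourTargets, hij]⟩
  rw [← card_toLeft_add_card_toRight]
  by_cases hY : Disjoint X.toLeft Y
  · obtain hX | ⟨β, hβ⟩ := X.toRight.eq_empty_or_nonempty
    · have := bound (P := outNeighbors R X.toLeft) (K := ∅) fun x hx ↦ by
        obtain ⟨j, hj, rfl⟩ | ⟨γ, hγ, -⟩ := mem_disjSum.1 hx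
        exacts [inl_mem hj, by simp at hγ]
      simp only [hX, card_empty] at this ⊢
      omega
    · have := bound (P := outNeighbors R X.toLeft ∪ Q) (K := ∅) fun x hx ↦ by
        obtain ⟨j, hj, rfl⟩ | ⟨γ, hγ, -⟩ := mem_disjSum.1 hx
        · obtain hj | hj := mem_union.1 hj
          · exact inl_mem hj
          · exact mem_biUnion.2 ⟨.inr β, mem_toRight.1 hβ, by simp [detourTargets, hj]⟩
        · simp at hγ
      have := h _ hY
      simp only [card_empty] at *
      omega
  · obtain ⟨i, hi, hiY⟩ := not_disjoint_iff.1 hY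
    have := bound (P := outNeighbors R X.toLeft) (K := univ) fun x hx ↦ by
      obtain ⟨j, hj, rfl⟩ | ⟨γ, -, rfl⟩ := mem_disjSum.1 hx
      · exact inl_mem hj
      · exact mem_biUnion.2 ⟨.inl i, mem_toLeft.1 hi, by simp [detourTargets, hiY]⟩
    simp only [card_univ, Fintype.card_fin] at this
    omega

lemma exists_perm_of_hall [Fintype ι] (hR : ∀ i, R i i) {Y Q : Finset ι}
    (h : ∀ X, Disjoint X Y → #X + s ≤ #(outNeighbors R X ∪ Q)) :
    ∃ (σ : Equiv.Perm ι) (V : Finset ι), V ⊆ Y ∧ #V = s ∧ (∀ i ∉ V, R i (σ i)) ∧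
      ∀ i ∈ V, σ i ∈ Q := by
  obtain ⟨f, f_inj, hf⟩ := (all_card_le_biUnion_card_iff_exists_injective _).1
    (card_le_card_biUnion_detourTargets hR h)
  obtain ⟨σ, q, hσ, hq⟩ := exists_perm_of_equiv_sum
    (.ofBijective f (Finite.injective_iff_bijective.1 f_inj)) fun β γ hβγ ↦ by
      simpa [detourTargets, show f (.inr β) = .inr γ from hβγ] using hf (.inr β)
  simp only [Equiv.ofBijective_apply] at hσ hq
  refine ⟨σ, univ.map q, fun i hi ↦ ?_, by simp, fun i hi ↦ ?_, fun i hi ↦ ?_⟩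
  · obtain ⟨β, -, rfl⟩ := mem_map.1 hi
    by_contra hY
    simpa [detourTargets, (hq β).1, hY] using hf (.inl (q β))
  · simpa [detourTargets, hσ i (by simpa using hi)] using hf (.inl i)
  · obtain ⟨β, -, rfl⟩ := mem_map.1 hi
    simpa [detourTargets, (hq β).2] using hf (.inr β)

/-- A permutation that follows the arcs of `R` outside a set `V` of `s` vertices, and has no arc at
all from `V` to the image of `V`. -/
def FreeSaving (R : ι → ι → Prop) (s : ℕ) : Prop :=
  ∃ (σ : Equiv.Perm ι) (V : Finset ι), #V = s ∧ (∀ i ∉ V, R i (σ i)) ∧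
    ∀ i ∈ V, ∀ j ∈ V, ¬ R i (σ j)

lemma FreeSaving.swap (h : FreeSaving R s) : FreeSaving (Function.swap R) s := by
  obtain ⟨σ, V, hV, hσ, hfree⟩ := h
  refine ⟨σ⁻¹, V.map σ.toEmbedding, by simpa using hV, fun i hi ↦ ?_, fun i hi j hj ↦ ?_⟩
  · have : σ⁻¹ i ∉ V := fun h ↦ hi (mem_map.2 ⟨_, h, by simp⟩)
    simpa [Function.swap] using hσ _ this
  · obtain ⟨a, ha, rfl⟩ := mem_map.1 hi
    obtain ⟨b, hb, rfl⟩ := mem_map.1 hj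
    simpa [Function.swap] using hfree b hb a ha

/-- Up to at most `k` vertices, the digraph splits into two parts of more than `k` vertices with no
arcs between them. -/
def HasSeparation [Fintype ι] (R : ι → ι → Prop) (k : ℕ) : Prop :=
  ∃ X Q : Finset ι, (∀ x ∈ X, ∀ q ∈ Q, ¬ R x q ∧ ¬ R q x) ∧ k < #X ∧ k < #Q ∧ #(X ∪ Q)ᶜ ≤ k

lemma HasSeparation.swap [Fintype ι] (h : HasSeparation R s) :
    HasSeparation (Function.swap R) s := by
  obtain ⟨X, Q, hXQ, h⟩ := h
  exact ⟨X, Q, fun x hx q hq ↦ (hXQ x hx q hq).symm, h⟩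

section Separation

variable [Fintype ι]

lemma exists_card_outNeighbors_union_le (hR : ∀ i, R i i) (hfree : ¬ FreeSaving R (C + 1))
    {Y Q : Finset ι} (hYQ : ∀ y ∈ Y, ∀ q ∈ Q, ¬ R y q) :
    ∃ X, Disjoint X Y ∧ #(outNeighbors R X ∪ Q) ≤ #X + C := by
  by_contra! hall
  obtain ⟨σ, V, hVY, hV, hσ, hVQ⟩ := exists_perm_of_hall (s := C + 1) hR hall
  exact hfree ⟨σ, V, hV, hσ, fun i hi j hj ↦ hYQ i (hVY hi) _ (hVQ j hj)⟩

lemma separation_of_card_le (hR : ∀ i, R i i) {X X' : Finset ι}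
    (hX'X : Disjoint X' X) (hX : #(outNeighbors R X) ≤ #X + C)
    (hX' : #(outNeighbors R X' ∪ (outNeighbors R X)ᶜ) ≤ #X' + C)
    (hXC : 3 * C < #X) (hXC' : #(outNeighbors R X) + 3 * C < Fintype.card ι) :
    HasSeparation R (2 * C) := by
  set S := (outNeighbors R X' ∪ (outNeighbors R X)ᶜ) \ X'
  have hS : #S ≤ C := by
    rw [card_sdiff_of_subset ((subset_outNeighbors hR X').trans subset_union_left)]; omega
  have hXd : #(outNeighbors R X \ X) ≤ C := by
    rw [card_sdiff_of_subset (subset_outNeighbors hR X)]; omega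
  have hcompl := card_compl_add_card (outNeighbors R X)
  have subX : X ⊆ (X \ outNeighbors R X') ∪ S := fun x hx ↦ by
    have := disjoint_right.1 hX'X hx
    simp only [S, mem_union, mem_sdiff]
    tauto
  have subQ : (outNeighbors R X)ᶜ ⊆ ((outNeighbors R X)ᶜ ∩ X') ∪ S := fun x hx ↦ by
    simp only [S, mem_union, mem_sdiff, mem_inter]
    tauto
  have subRest : ((X \ outNeighbors R X') ∪ ((outNeighbors R X)ᶜ ∩ X'))ᶜ ⊆
      (outNeighbors R X \ X) ∪ S := fun x hx ↦ by
    have : x ∈ X → x ∈ outNeighbors R X := (subset_outNeighbors hR X ·)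
    have : x ∈ X' → x ∉ X := (disjoint_left.1 hX'X ·)
    simp only [S, mem_union, mem_sdiff, mem_inter, mem_compl] at hx ⊢
    tauto
  have cardX := (card_le_card subX).trans (card_union_le _ _)
  have cardQ := (card_le_card subQ).trans (card_union_le _ _)
  have cardRest := (card_le_card subRest).trans (card_union_le _ _)
  refine ⟨X \ outNeighbors R X', (outNeighbors R X)ᶜ ∩ X', fun x hx q hq ↦ ?_, by omega, by omega,
    by omega⟩
  rw [mem_sdiff] at hx
  rw [mem_inter, mem_compl] at hq
  exact ⟨fun h ↦ hq.1 (mem_outNeighbors.2 ⟨x, hx.1, h⟩),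
    fun h ↦ hx.2 (mem_outNeighbors.2 ⟨q, hq.2, h⟩)⟩

lemma hasSeparation_of_not_freeSaving (hR : ∀ i, R i i) (hfree : ¬ FreeSaving R (C + 1))
    {J : Finset ι} (hJ : 4 * C + 1 ≤ #J)
    (hin : #(outNeighbors (Function.swap R) J) + 4 * C < Fintype.card ι) :
    HasSeparation R (2 * C) := by
  set M := outNeighbors (Function.swap R) J
  obtain ⟨X, hXM, hX⟩ := exists_card_outNeighbors_union_le hR hfree (Y := Mᶜ) (Q := J)
    fun y hy j hj hyj ↦ (mem_compl.1 hy) (mem_outNeighbors.2 ⟨j, hj, hyj⟩)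
  obtain ⟨X', hX'X, hX'⟩ := exists_card_outNeighbors_union_le hR hfree (Y := X)
    (Q := (outNeighbors R X)ᶜ)
    fun x hx q hq hxq ↦ (mem_compl.1 hq) (mem_outNeighbors.2 ⟨x, hx, hxq⟩)
  have hXM : #X ≤ #M := card_le_card (by rwa [disjoint_compl_right_iff] at hXM)
  have hJX : #J ≤ #X + C := (card_le_card subset_union_right).trans hX
  have hXX : #(outNeighbors R X) ≤ #X + C := (card_le_card subset_union_left).trans hX
  exact separation_of_card_le hR hX'X hXX hX' (by omega) (by omega)

end Separation

/-- A permutation that follows the arcs of `R` outside a set `V` of `s` vertices, such that every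
arc from `j ∈ V` to the image of `j' ∈ V` is compensated by a helper `i ∉ V` forming arcs from `j`
to the image of `i` and from `i` to the image of `j'`. The label `w` makes sure that a helper serves
a single `j` as source (`Sum.inl j`) or a single `j'` as target (`Sum.inr j'`). -/
def Saving (R : ι → ι → Prop) (s : ℕ) : Prop :=
  ∃ (σ : Equiv.Perm ι) (V : Finset ι) (w : ι → ι ⊕ ι), #V = s ∧ (∀ i ∉ V, R i (σ i)) ∧
    ∀ j ∈ V, ∀ j' ∈ V, R j (σ j') →
      ∃ i ∉ V, R j (σ i) ∧ R i (σ j') ∧ (w i = .inl j ∨ w i = .inr j')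

lemma FreeSaving.saving (h : FreeSaving R s) : Saving R s := by
  obtain ⟨σ, V, hV, hσ, hfree⟩ := h
  exact ⟨σ, V, .inl, hV, hσ, fun j hj j' hj' h ↦ (hfree j hj j' hj' h).elim⟩

lemma saving_zero (hR : ∀ i, R i i) : Saving R 0 :=
  ⟨1, ∅, .inl, rfl, fun i _ ↦ hR i, by simp⟩

lemma saving_one_of_rel (hR : ∀ i, R i i) {z v : ι} (hzv : z ≠ v) (h : R z v) : Saving R 1 := by
  refine ⟨.swap z v, {v}, fun _ ↦ .inl v, by simp, fun i hi ↦ ?_, fun j hj j' hj' _ ↦ ?_⟩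
  · rw [mem_singleton] at hi
    obtain rfl | hz := eq_or_ne i z
    · simpa using h
    · rw [Equiv.swap_apply_of_ne_of_ne hz hi]; exact hR i
  · obtain rfl := mem_singleton.1 hj
    obtain rfl := mem_singleton.1 hj'
    exact ⟨z, by simpa using hzv, by simpa using hR _, by simpa using hR z, .inl rfl⟩

lemma Saving.map (hR : ∀ i, R i i) (e : κ ↪ ι) (h : Saving (fun i j ↦ R (e i) (e j)) s) :
    Saving R s := by
  obtain ⟨σ, V, w, hV, hσ, hhelp⟩ := h
  refine ⟨σ.viaEmbedding e, V.map e,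
    Function.extend e (Sum.map e e ∘ w) .inl, by simpa using hV, fun i hi ↦ ?_, ?_⟩
  · by_cases hie : i ∈ Set.range e
    · obtain ⟨a, rfl⟩ := hie
      rw [σ.viaEmbedding_apply]
      exact hσ a fun ha ↦ hi (mem_map_of_mem e ha)
    · rw [σ.viaEmbedding_apply_of_notMem e i hie]; exact hR i
  · simp only [mem_map, forall_exists_index, and_imp]
    rintro _ j hj rfl _ j' hj' rfl hjj'
    rw [σ.viaEmbedding_apply] at hjj' ⊢
    obtain ⟨i, hiV, hji, hij', hw⟩ := hhelp j hj j' hj' hjj'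
    refine ⟨e i, by simpa using hiV, by rwa [σ.viaEmbedding_apply], hij', ?_⟩
    rw [e.injective.extend_apply]
    exact hw.imp (fun h ↦ by simp [h]) fun h ↦ by simp [h]

lemma Saving.sum {R : ι ⊕ κ → ι ⊕ κ → Prop} {t : ℕ}
    (hcross : ∀ i k, ¬ R (.inl i) (.inr k) ∧ ¬ R (.inr k) (.inl i))
    (h : Saving (fun i j ↦ R (.inl i) (.inl j)) s) (h' : Saving (fun i j ↦ R (.inr i) (.inr j)) t) :
    Saving R (s + t) := by
  obtain ⟨σ, V, w, hV, hσ, hhelp⟩ := h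
  obtain ⟨τ, W, w', hW, hτ, hhelp'⟩ := h'
  refine ⟨σ.sumCongr τ, V.disjSum W, Sum.elim (Sum.map .inl .inl ∘ w) (Sum.map .inr .inr ∘ w'),
    by rw [card_disjSum, hV, hW], ?_, ?_⟩
  · rintro (i | k) hi
    · exact hσ i fun h ↦ hi (inl_mem_disjSum.2 h)
    · exact hτ k fun h ↦ hi (inr_mem_disjSum.2 h)
  · rintro (j | j) hj (j' | j') hj' hjj'
    · obtain ⟨i, hiV, hji, hij', hw⟩ := hhelp j (by simpa using hj) j' (by simpa using hj') hjj'
      exact ⟨.inl i, by simpa using hiV, hji, hij',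
        hw.imp (fun h ↦ by simp [h]) fun h ↦ by simp [h]⟩
    · exact ((hcross _ _).1 hjj').elim
    · exact ((hcross _ _).2 hjj').elim
    · obtain ⟨i, hiV, hji, hij', hw⟩ := hhelp' j (by simpa using hj) j' (by simpa using hj') hjj'
      exact ⟨.inr i, by simpa using hiV, hji, hij',
        hw.imp (fun h ↦ by simp [h]) fun h ↦ by simp [h]⟩

lemma Saving.of_separated (hR : ∀ i, R i i) {X Q : Finset ι} {t : ℕ}
    (hXQ : ∀ x ∈ X, ∀ q ∈ Q, ¬ R x q ∧ ¬ R q x) (hX : Saving (fun i j : X ↦ R i j) s)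
    (hQ : Saving (fun i j : Q ↦ R i j) t) : Saving R (s + t) := by
  let e : X ⊕ Q ↪ ι := ⟨Sum.elim (↑) (↑), by
    rintro (x | x) (y | y) hxy
    · exact congrArg _ (Subtype.ext hxy)
    · exact ((hXQ x x.2 y y.2).1 (by rw [show (x : ι) = y from hxy]; exact hR _)).elim
    · exact ((hXQ y y.2 x x.2).1 (by rw [show (x : ι) = y from hxy]; exact hR _)).elim
    · exact congrArg _ (Subtype.ext hxy)⟩
  exact .map hR e (.sum (fun x q ↦ hXQ x x.2 q q.2) hX hQ)

section ArcSystem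

/-- A set of disjoint arcs `σ v → v`, `v ∈ V`, together with labelled helpers, chosen among the
fixed points of the involution `σ`, for every ordered pair of distinct arcs. -/
structure ArcSystem (R : ι → ι → Prop) (V : Finset ι) (σ : Equiv.Perm ι)
    (w : ι → Option (ι ⊕ ι)) : Prop where
  involutive : Function.Involutive σ
  rel : ∀ i ∉ V, R i (σ i)
  apply_notMem : ∀ v ∈ V, σ v ∉ V
  apply_of_label : ∀ i, w i ≠ none → σ i = i
  exists_helper : ∀ v ∈ V, ∀ v' ∈ V, v ≠ v' →
    ∃ i, R v i ∧ R i (σ v') ∧ (w i = some (.inl v) ∨ w i = some (.inr v'))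

variable {V : Finset ι} {σ : Equiv.Perm ι} {w w' : ι → Option (ι ⊕ ι)} {v z : ι} {I O : Finset ι}

lemma swap_mul_apply_of_ne (hv : σ v = v) (hz : σ z = z) {x : ι} (hxv : x ≠ v) (hxz : x ≠ z) :
    (Equiv.swap v z * σ) x = σ x := by
  rw [Equiv.Perm.mul_apply, Equiv.swap_apply_of_ne_of_ne]
  exacts [hv ▸ σ.injective.ne hxv, hz ▸ σ.injective.ne hxz]

lemma involutive_swap_mul (hσ : Function.Involutive σ) (hv : σ v = v) (hz : σ z = z) :
    Function.Involutive (Equiv.swap v z * σ) := fun x ↦ by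
  obtain rfl | hxv := eq_or_ne x v
  · simp [hv, hz]
  obtain rfl | hxz := eq_or_ne x z
  · simp [hv, hz]
  rw [swap_mul_apply_of_ne hv hz hxv hxz, swap_mul_apply_of_ne hv hz, hσ x]
  exacts [hv ▸ σ.injective.ne hxv, hz ▸ σ.injective.ne hxz]

namespace ArcSystem

lemma notMem_of_apply_eq (h : ArcSystem R V σ w) (hv : σ v = v) : v ∉ V :=
  fun hvV ↦ h.apply_notMem v hvV (hv.symm ▸ hvV)

lemma saving (hR : ∀ i, R i i) (h : ArcSystem R V σ w) : Saving R #V := by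
  refine ⟨σ, V, fun i ↦ (w i).getD (.inl (σ i)), rfl, h.rel, fun j hj j' hj' _ ↦ ?_⟩
  obtain rfl | hjj' := eq_or_ne j j'
  · have label : w (σ j) = none := by
      by_contra hne
      have hjj := h.apply_of_label _ hne
      rw [h.involutive j] at hjj
      exact h.notMem_of_apply_eq hjj.symm hj
    exact ⟨σ j, h.apply_notMem j hj, by rw [h.involutive j]; exact hR j, hR _,
      .inl (by simp [label, h.involutive j])⟩
  · obtain ⟨i, hji, hij', hw⟩ := h.exists_helper j hj j' hj' hjj'
    have hi : σ i = i := h.apply_of_label i (by rcases hw with hw | hw <;> simp [hw])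
    exact ⟨i, h.notMem_of_apply_eq hi, by rwa [hi], hij',
      hw.imp (fun h ↦ by simp [h]) fun h ↦ by simp [h]⟩

lemma insert (h : ArcSystem R V σ w) (hv : σ v = v) (hz : σ z = z)
    (hwv : w v = none) (hwz : w z = none) (hvz : v ≠ z) (hzv : R z v)
    (hout : ∀ x ∈ V, ∃ i, w i = some (.inl x) ∧ R x i ∧ R i z)
    (hin : ∀ x ∈ V, ∃ i, w i = some (.inr x) ∧ R i (σ x) ∧ R v i) :
    ArcSystem R (insert v V) (Equiv.swap v z * σ) w := by
  have apply_v : (Equiv.swap v z * σ) v = z := by simp [hv]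
  have apply_V {x} (hx : x ∈ V) : (Equiv.swap v z * σ) x = σ x :=
    swap_mul_apply_of_ne hv hz (fun hxv ↦ h.notMem_of_apply_eq hv (hxv ▸ hx))
      fun hxz ↦ h.notMem_of_apply_eq hz (hxz ▸ hx)
  refine ⟨involutive_swap_mul h.involutive hv hz, fun i hi ↦ ?_, fun x hx ↦ ?_, fun i hi ↦ ?_,
    fun x hx y hy hxy ↦ ?_⟩
  · rw [mem_insert, not_or] at hi
    obtain rfl | hiz := eq_or_ne i z
    · simpa [hz] using hzv
    · rw [swap_mul_apply_of_ne hv hz hi.1 hiz]; exact h.rel i hi.2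
  · obtain rfl | hx := mem_insert.1 hx
    · rw [apply_v, mem_insert, not_or]
      exact ⟨hvz.symm, h.notMem_of_apply_eq hz⟩
    · rw [apply_V hx, mem_insert, not_or]
      refine ⟨fun hxv ↦ h.notMem_of_apply_eq hv ?_, h.apply_notMem x hx⟩
      rwa [← hv, ← hxv, h.involutive x]
  · rw [swap_mul_apply_of_ne hv hz, h.apply_of_label i hi]
    exacts [fun hiv ↦ hi (hiv ▸ hwv), fun hiz ↦ hi (hiz ▸ hwz)]
  · obtain rfl | hxV := mem_insert.1 hx <;> obtain rfl | hyV := mem_insert.1 hy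
    · exact (hxy rfl).elim
    · rw [apply_V hyV]
      obtain ⟨i, hw, hiy, hvi⟩ := hin y hyV
      exact ⟨i, hvi, hiy, .inr hw⟩
    · rw [apply_v]
      obtain ⟨i, hw, hxi, hiz⟩ := hout x hxV
      exact ⟨i, hxi, hiz, .inl hw⟩
    · rw [apply_V hyV]
      exact h.exists_helper x hxV y hyV hxy

lemma relabel (h : ArcSystem R V σ w) (hww' : ∀ i, w i ≠ none → w' i = w i)
    (hw' : ∀ i, w' i ≠ none → σ i = i) : ArcSystem R V σ w' where
  __ := h
  apply_of_label := hw'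
  exists_helper x hx y hy hxy := by
    obtain ⟨i, hxi, hiy, hw⟩ := h.exists_helper x hx y hy hxy
    have hwi : w' i = w i := hww' i (by rcases hw with hw | hw <;> simp [hw])
    exact ⟨i, hxi, hiy, by rwa [hwi]⟩

end ArcSystem

/-- The labelling `w` updated so that `I` helps `v` as a target and `O` helps `v` as a source. -/
noncomputable def addLabels (w : ι → Option (ι ⊕ ι)) (v : ι) (I O : Finset ι) (i : ι) :
    Option (ι ⊕ ι) :=
  if i ∈ I then some (.inr v) else if i ∈ O then some (.inl v) else w i

lemma addLabels_ne_none {i : ι} (hi : addLabels w v I O i ≠ none) :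
    (i ∈ I ∨ i ∈ O) ∨ w i ≠ none := by
  unfold addLabels at hi
  split_ifs at hi <;> simp_all

end ArcSystem

section Greedy

variable [Fintype ι] {k D m b : ℕ} {F : Finset ι}

/-- Every set of at least `k` vertices has all but at most `D` vertices as out-neighbours. -/
def Expanding (R : ι → ι → Prop) (k D : ℕ) : Prop :=
  ∀ J : Finset ι, k ≤ #J → #(outNeighbors R J)ᶜ ≤ D

lemma Expanding.exists_rel (h : Expanding R k D) {A B : Finset ι} (hA : k ≤ #A)
    (hB : k + D < #B) : ∃ a ∈ A, ∃ b ∈ B, a ≠ b ∧ R a b := by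
  obtain ⟨J, hJA, hJ⟩ := exists_subset_card_eq hA
  obtain ⟨b, hb, hbJ⟩ := exists_mem_notMem_of_card_lt_card
    (s := (outNeighbors R J)ᶜ) (t := B \ J) (by
      have := h J hJ.ge
      have := card_le_card_sdiff_add_card (s := B) (t := J)
      omega)
  rw [mem_compl, not_not] at hbJ
  obtain ⟨a, ha, hab⟩ := mem_outNeighbors.1 hbJ
  rw [mem_sdiff] at hb
  exact ⟨a, hJA ha, b, hb.1, fun h ↦ hb.2 (h ▸ ha), hab⟩

lemma Expanding.card_low_lt (h : Expanding R k D) (hF : D + k * m < #F) :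
    #{z | #{i ∈ F | i ≠ z ∧ R z i} < m} < k := by
  by_contra! hcon
  obtain ⟨J, hJ, hJk⟩ := exists_subset_card_eq hcon
  have hcover : F ⊆ (outNeighbors R J)ᶜ ∪ J.biUnion fun z ↦ insert z {i ∈ F | i ≠ z ∧ R z i} := by
    intro i hi
    by_cases hiJ : i ∈ outNeighbors R J
    · obtain ⟨z, hz, hzi⟩ := mem_outNeighbors.1 hiJ
      refine mem_union_right _ (mem_biUnion.2 ⟨z, hz, ?_⟩)
      by_cases hiz : i = z <;> simp [hiz, hi, hzi]
    · exact mem_union_left _ (mem_compl.2 hiJ)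
  have hbiUnion : #(J.biUnion fun z ↦ insert z {i ∈ F | i ≠ z ∧ R z i}) ≤ #J * m :=
    card_biUnion_le_card_mul _ _ _ fun z hz ↦
      (card_insert_le _ _).trans (by simpa using (mem_filter.1 (hJ hz)).2)
  have := h J hJk.ge
  have := (card_le_card hcover).trans (card_union_le _ _)
  rw [hJk] at hbiUnion
  omega

lemma Expanding.card_biUnion_compl_le (h : Expanding R k D) {V : Finset ι} {pool : ι → Finset ι}
    (hpool : ∀ v ∈ V, k ≤ #(pool v)) :
    #(V.biUnion fun v ↦ (outNeighbors R (pool v))ᶜ) ≤ #V * D :=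
  card_biUnion_le_card_mul _ _ _ fun v hv ↦ h _ (hpool v hv)

variable {badz badv : Finset ι}

lemma exists_high_degree (h : Expanding R k D) (h' : Expanding (Function.swap R) k D)
    (hbadz : #badz ≤ b) (hbadv : #badv ≤ b) (hF : D + k * k + k < #F)
    (hFb : D + k * k + b + 1 < #F) :
    ∃ z ∈ F, z ∉ badz ∧ k + 1 ≤ #{i ∈ F | i ≠ z ∧ R i z} ∧
      k ≤ #{i ∈ F \ badv | i ≠ z ∧ R z i} := by
  let lowIn : Finset ι := {z | #{i ∈ F | i ≠ z ∧ R i z} < k + 1}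
  let lowOut : Finset ι := {z | #{i ∈ F \ badv | i ≠ z ∧ R z i} < k}
  have hin : #lowIn < k := h'.card_low_lt (by rw [mul_add]; omega)
  have hout : #lowOut < k := h.card_low_lt (by
    have := card_le_card_sdiff_add_card (s := F) (t := badv)
    omega)
  have hcard : #(badz ∪ (lowIn ∪ lowOut)) < #F := by
    have := card_union_le badz (lowIn ∪ lowOut)
    have := card_union_le lowIn lowOut
    have : 2 * k ≤ k * k + 1 := by nlinarith [sq_nonneg ((k : ℤ) - 1)]
    omega
  obtain ⟨z, hzF, hz⟩ := exists_mem_notMem_of_card_lt_card hcard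
  simp only [lowIn, lowOut, mem_union, mem_filter, mem_univ, true_and, not_or, not_lt] at hz
  exact ⟨z, hzF, hz⟩

/-- An arc `z → v` inside `F` with disjoint sets of `k` in-neighbours of `z` and `k` out-neighbours
of `v`. -/
structure IsHub (R : ι → ι → Prop) (k : ℕ) (F : Finset ι) (z v : ι) (I O : Finset ι) : Prop where
  left_mem : z ∈ F
  right_mem : v ∈ F
  ne : v ≠ z
  rel : R z v
  in_subset : ∀ i ∈ I, (i ∈ F ∧ i ≠ z ∧ i ≠ v) ∧ R i z
  out_subset : ∀ i ∈ O, (i ∈ F ∧ i ≠ z ∧ i ≠ v) ∧ R v i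
  disjoint : Disjoint I O
  card_in : #I = k
  card_out : #O = k

lemma exists_isHub (h : Expanding R k D) (h' : Expanding (Function.swap R) k D)
    (hbadz : #badz ≤ b) (hbadv : #badv ≤ b) (hF : D + k * k + k + 2 < #F)
    (hFb : D + k * k + b + 1 < #F) :
    ∃ z v I O, IsHub R k F z v I O ∧ z ∉ badz ∧ v ∉ badv := by
  obtain ⟨z, hzF, hz, hin, hout⟩ := exists_high_degree h h' hbadz hbadv (by omega) hFb
  obtain ⟨I', hI', hI'k⟩ := exists_subset_card_eq hin
  have hlow := h.card_low_lt (m := k) (F := (F \ I') \ {z}) (by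
    have := card_le_card_sdiff_add_card (s := F) (t := I')
    have := card_le_card_sdiff_add_card (s := F \ I') (t := {z})
    rw [card_singleton] at this
    omega)
  obtain ⟨v, hv, hvO⟩ := exists_mem_notMem_of_card_lt_card (hlow.trans_le hout)
  simp only [mem_filter, mem_univ, true_and, not_lt, mem_sdiff] at hv hvO
  obtain ⟨⟨hvF, hvb⟩, hvz, hzv⟩ := hv
  obtain ⟨O, hO, hOk⟩ := exists_subset_card_eq hvO
  obtain ⟨I, hI, hIk⟩ := exists_subset_card_eq (s := I' \ {v}) (n := k) (by
    have := card_le_card_sdiff_add_card (s := I') (t := {v})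
    rw [card_singleton] at this
    omega)
  refine ⟨z, v, I, O, ⟨hzF, hvF, hvz, hzv, fun i hi ↦ ?_, fun i hi ↦ ?_, ?_, hIk, hOk⟩, hz, hvb⟩
  · have hiI := mem_sdiff.1 (hI hi)
    have := hI' hiI.1
    simp_all
  · have := hO hi
    simp_all
  · refine disjoint_left.2 fun i hi hiO ↦ ?_
    have := (mem_sdiff.1 (hI hi)).1
    have := hO hiO
    simp_all

variable {V : Finset ι} {σ : Equiv.Perm ι} {w : ι → Option (ι ⊕ ι)} {z v : ι} {I O : Finset ι}

/-- The vertices that are neither moved by `σ` nor labelled by `w`. -/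
noncomputable def freeVertices (σ : Equiv.Perm ι) (w : ι → Option (ι ⊕ ι)) : Finset ι :=
  {i | σ i = i ∧ w i = none}

lemma mem_freeVertices {i : ι} : i ∈ freeVertices σ w ↔ σ i = i ∧ w i = none := by
  simp [freeVertices]

/-- The candidates to help `v` as a source: vertices labelled `Sum.inl v` to which `v` has an
arc. -/
noncomputable def outPool (R : ι → ι → Prop) (w : ι → Option (ι ⊕ ι)) (v : ι) : Finset ι :=
  {i | w i = some (.inl v) ∧ R v i}

/-- The candidates to help `v` as a target: vertices labelled `Sum.inr v` with an arc to `σ v`. -/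
noncomputable def inPool (R : ι → ι → Prop) (σ : Equiv.Perm ι) (w : ι → Option (ι ⊕ ι)) (v : ι) :
    Finset ι :=
  {i | w i = some (.inr v) ∧ R i (σ v)}

lemma mem_outPool {i : ι} : i ∈ outPool R w v ↔ w i = some (.inl v) ∧ R v i := by
  simp [outPool]

lemma mem_inPool {i : ι} : i ∈ inPool R σ w v ↔ w i = some (.inr v) ∧ R i (σ v) := by
  simp [inPool]

/-- An arc system whose labels provide every arc with `k` candidate helpers in each role, while few
vertices are used up. In an expanding digraph almost every vertex is then reached from all pools, so
the system can be enlarged. -/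
structure PoolSystem (R : ι → ι → Prop) (k : ℕ) (V : Finset ι) (σ : Equiv.Perm ι)
    (w : ι → Option (ι ⊕ ι)) : Prop extends ArcSystem R V σ w where
  mem_of_apply_ne : ∀ i, σ i ≠ i → i ∈ V ∨ σ i ∈ V
  card_label_le : #{i | w i ≠ none} ≤ 2 * k * #V
  le_card_outPool : ∀ v ∈ V, k ≤ #(outPool R w v)
  le_card_inPool : ∀ v ∈ V, k ≤ #(inPool R σ w v)

lemma IsHub.addLabels_eq (h : IsHub R k (freeVertices σ w) z v I O) {i : ι} (hi : w i ≠ none) :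
    addLabels w v I O i = w i := by
  have hiI : i ∉ I := fun hiI ↦ hi (mem_freeVertices.1 (h.in_subset i hiI).1.1).2
  have hiO : i ∉ O := fun hiO ↦ hi (mem_freeVertices.1 (h.out_subset i hiO).1.1).2
  simp [addLabels, hiI, hiO]

namespace PoolSystem

lemma card_le (h : PoolSystem R k V σ w) :
    Fintype.card ι ≤ #(freeVertices σ w) + (2 * k + 2) * #V := by
  have hcover : (univ : Finset ι) ⊆
      freeVertices σ w ∪ (({i | w i ≠ none} : Finset ι) ∪ (V ∪ V.image σ)) := by
    intro i _
    by_cases hw : w i = none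
    · by_cases hσ : σ i = i
      · exact mem_union_left _ (mem_freeVertices.2 ⟨hσ, hw⟩)
      · obtain hi | hi := h.mem_of_apply_ne i hσ
        · simp [hi]
        · have : i ∈ V.image σ := mem_image.2 ⟨σ i, hi, h.involutive i⟩
          simp only [mem_union, this, or_true]
    · simp [hw]
  have := card_le_card hcover
  have := card_union_le (freeVertices σ w) (({i | w i ≠ none} : Finset ι) ∪ (V ∪ V.image σ))
  have := card_union_le ({i | w i ≠ none} : Finset ι) (V ∪ V.image σ)
  have := card_union_le V (V.image σ)
  have : #(V.image σ) ≤ #V := card_image_le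
  have := h.card_label_le
  rw [card_univ] at *
  rw [add_mul]
  omega

lemma insert_arcSystem (h : PoolSystem R k V σ w) (hz : z ∈ freeVertices σ w)
    (hv : v ∈ freeVertices σ w) (hvz : v ≠ z) (hzv : R z v)
    (hout : z ∉ V.biUnion fun x ↦ (outNeighbors R (outPool R w x))ᶜ)
    (hin : v ∉ V.biUnion fun x ↦ (outNeighbors (Function.swap R) (inPool R σ w x))ᶜ) :
    ArcSystem R (insert v V) (Equiv.swap v z * σ) w := by
  rw [mem_freeVertices] at hz hv
  simp only [mem_biUnion, mem_compl, mem_outNeighbors, mem_outPool, mem_inPool, not_exists, not_and,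
    not_forall, not_not] at hout hin
  refine h.toArcSystem.insert hv.1 hz.1 hv.2 hz.2 hvz hzv (fun x hx ↦ ?_) fun x hx ↦ ?_
  · obtain ⟨i, ⟨hw, hxi⟩, hiz⟩ := hout x hx
    exact ⟨i, hw, hxi, hiz⟩
  · obtain ⟨i, ⟨hw, hix⟩, hvi⟩ := hin x hx
    exact ⟨i, hw, hix, hvi⟩

lemma card_addLabels_le (h : PoolSystem R k V σ w) (hv : v ∉ V) (hI : #I = k) (hO : #O = k) :
    #{i | addLabels w v I O i ≠ none} ≤ 2 * k * #(insert v V) := by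
  have hsub : ({i | addLabels w v I O i ≠ none} : Finset ι) ⊆
      ({i | w i ≠ none} : Finset ι) ∪ (I ∪ O) := fun i hi ↦ by
    have := addLabels_ne_none (mem_filter.1 hi).2
    simp only [mem_union, mem_filter, mem_univ, true_and]
    tauto
  have := card_le_card hsub
  have := card_union_le ({i | w i ≠ none} : Finset ι) (I ∪ O)
  have := card_union_le I O
  have := h.card_label_le
  rw [card_insert_of_notMem hv, mul_add]
  omega

lemma swap_mul_apply_of_mem (h : PoolSystem R k V σ w)
    (hhub : IsHub R k (freeVertices σ w) z v I O) {x : ι} (hx : x ∈ V) :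
    (Equiv.swap v z * σ) x = σ x := by
  have hv := (mem_freeVertices.1 hhub.right_mem).1
  have hz := (mem_freeVertices.1 hhub.left_mem).1
  exact swap_mul_apply_of_ne hv hz (fun hxv ↦ h.notMem_of_apply_eq hv (hxv ▸ hx))
    fun hxz ↦ h.notMem_of_apply_eq hz (hxz ▸ hx)

lemma le_card_outPool_addLabels (h : PoolSystem R k V σ w)
    (hhub : IsHub R k (freeVertices σ w) z v I O) :
    ∀ x ∈ insert v V, k ≤ #(outPool R (addLabels w v I O) x) := by
  intro x hx
  obtain rfl | hxV := mem_insert.1 hx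
  · refine hhub.card_out.ge.trans (card_le_card fun i hi ↦ mem_outPool.2 ⟨?_, ?_⟩)
    · simp [addLabels, hi, disjoint_right.1 hhub.disjoint hi]
    · exact (hhub.out_subset i hi).2
  · refine (h.le_card_outPool x hxV).trans (card_le_card fun i hi ↦ ?_)
    obtain ⟨hw, hxi⟩ := mem_outPool.1 hi
    exact mem_outPool.2 ⟨(hhub.addLabels_eq (by simp [hw])).trans hw, hxi⟩

lemma le_card_inPool_addLabels (h : PoolSystem R k V σ w)
    (hhub : IsHub R k (freeVertices σ w) z v I O) :
    ∀ x ∈ insert v V, k ≤ #(inPool R (Equiv.swap v z * σ) (addLabels w v I O) x) := by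
  intro x hx
  obtain rfl | hxV := mem_insert.1 hx
  · refine hhub.card_in.ge.trans
      (card_le_card fun i hi ↦ mem_inPool.2 ⟨by simp [addLabels, hi], ?_⟩)
    simpa [(mem_freeVertices.1 hhub.right_mem).1] using (hhub.in_subset i hi).2
  · refine (h.le_card_inPool x hxV).trans (card_le_card fun i hi ↦ ?_)
    obtain ⟨hw, hix⟩ := mem_inPool.1 hi
    refine mem_inPool.2 ⟨(hhub.addLabels_eq (by simp [hw])).trans hw, ?_⟩
    rwa [h.swap_mul_apply_of_mem hhub hxV]

lemma insert_addLabels (h : PoolSystem R k V σ w) (hhub : IsHub R k (freeVertices σ w) z v I O)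
    (hout : z ∉ V.biUnion fun x ↦ (outNeighbors R (outPool R w x))ᶜ)
    (hin : v ∉ V.biUnion fun x ↦ (outNeighbors (Function.swap R) (inPool R σ w x))ᶜ) :
    PoolSystem R k (insert v V) (Equiv.swap v z * σ) (addLabels w v I O) := by
  have hv := (mem_freeVertices.1 hhub.right_mem).1
  have hz := (mem_freeVertices.1 hhub.left_mem).1
  have apply_of_free {i} (hi : i ∈ freeVertices σ w ∧ i ≠ z ∧ i ≠ v) :
      (Equiv.swap v z * σ) i = i := by
    rw [swap_mul_apply_of_ne hv hz hi.2.2 hi.2.1, (mem_freeVertices.1 hi.1).1]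
  have arcs := h.insert_arcSystem hhub.left_mem hhub.right_mem hhub.ne hhub.rel hout hin
  refine ⟨arcs.relabel (fun i ↦ hhub.addLabels_eq) fun i hi ↦ ?_, fun i hi ↦ ?_,
    h.card_addLabels_le (h.notMem_of_apply_eq hv) hhub.card_in hhub.card_out,
    h.le_card_outPool_addLabels hhub, h.le_card_inPool_addLabels hhub⟩
  · obtain (hiI | hiO) | hw := addLabels_ne_none hi
    exacts [apply_of_free (hhub.in_subset i hiI).1, apply_of_free (hhub.out_subset i hiO).1,
      arcs.apply_of_label i hw]
  · obtain rfl | hiv := eq_or_ne i v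
    · simp
    obtain rfl | hiz := eq_or_ne i z
    · simp [hz]
    rw [swap_mul_apply_of_ne hv hz hiv hiz] at hi ⊢
    exact (h.mem_of_apply_ne i hi).imp (mem_insert_of_mem ·) (mem_insert_of_mem ·)

lemma exists_insert (hR : Expanding R (4 * C + 1) (4 * C))
    (hR' : Expanding (Function.swap R) (4 * C + 1) (4 * C))
    (hcard : 28 * C ^ 2 + 7 * C + 1 < Fintype.card ι) (h : PoolSystem R (4 * C + 1) V σ w)
    (hV : #V < C) : ∃ v ∉ V, ∃ σ' w', PoolSystem R (4 * C + 1) (insert v V) σ' w' := by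
  have hfree := h.card_le
  obtain ⟨e, he⟩ := Nat.exists_eq_add_of_lt hV
  obtain ⟨z, v, I, O, hhub, hz, hv⟩ := exists_isHub (F := freeVertices σ w) hR hR'
    (hR.card_biUnion_compl_le h.le_card_outPool) (hR'.card_biUnion_compl_le h.le_card_inPool)
    (by subst he; nlinarith) (by subst he; nlinarith)
  exact ⟨v, h.notMem_of_apply_eq (mem_freeVertices.1 hhub.right_mem).1, _, _,
    h.insert_addLabels hhub hz hv⟩

lemma exists_insert_arcSystem (hR : Expanding R (4 * C + 1) (4 * C))
    (hR' : Expanding (Function.swap R) (4 * C + 1) (4 * C)) (hC : 1 ≤ C)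
    (hcard : 28 * C ^ 2 + 7 * C + 1 < Fintype.card ι) (h : PoolSystem R (4 * C + 1) V σ w)
    (hV : #V = C) : ∃ v ∉ V, ∃ σ', ArcSystem R (insert v V) σ' w := by
  have hfree := h.card_le
  have hout := hR.card_biUnion_compl_le h.le_card_outPool
  have hin := hR'.card_biUnion_compl_le h.le_card_inPool
  rw [hV] at hfree hout hin
  set badz := V.biUnion fun x ↦ (outNeighbors R (outPool R w x))ᶜ
  set badv := V.biUnion fun x ↦ (outNeighbors (Function.swap R) (inPool R σ w x))ᶜ
  obtain ⟨z, hz, v, hv, hzv, hrel⟩ := hR.exists_rel (A := freeVertices σ w \ badz)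
    (B := freeVertices σ w \ badv)
    (by have := card_le_card_sdiff_add_card (s := freeVertices σ w) (t := badz); nlinarith)
    (by have := card_le_card_sdiff_add_card (s := freeVertices σ w) (t := badv); nlinarith)
  rw [mem_sdiff] at hz hv
  exact ⟨v, h.notMem_of_apply_eq (mem_freeVertices.1 hv.1).1, _,
    h.insert_arcSystem hz.1 hv.1 hzv.symm hrel hz.2 hv.2⟩

end PoolSystem

lemma Expanding.saving (hrefl : ∀ i, R i i) (hR : Expanding R (4 * C + 1) (4 * C))
    (hR' : Expanding (Function.swap R) (4 * C + 1) (4 * C)) (hC : 1 ≤ C)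
    (hcard : 28 * C ^ 2 + 7 * C + 1 < Fintype.card ι) : Saving R (C + 1) := by
  have exists_poolSystem : ∀ r ≤ C, ∃ V σ w, PoolSystem R (4 * C + 1) V σ w ∧ #V = r := by
    intro r
    induction r with
    | zero =>
      intro _
      refine ⟨∅, 1, fun _ ↦ none, ⟨⟨fun _ ↦ rfl, ?_, ?_, ?_, ?_⟩, ?_, ?_, ?_, ?_⟩, rfl⟩ <;>
        simp [hrefl]
    | succ r ih =>
      intro hr
      obtain ⟨V, σ, w, h, hV⟩ := ih (by omega)
      obtain ⟨v, hv, σ', w', h'⟩ := h.exists_insert hR hR' hcard (by omega)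
      exact ⟨_, σ', w', h', by rw [card_insert_of_notMem hv, hV]⟩
  obtain ⟨V, σ, w, h, hV⟩ := exists_poolSystem C le_rfl
  obtain ⟨v, hv, σ', h'⟩ := h.exists_insert_arcSystem hR hR' hC hcard hV
  simpa [card_insert_of_notMem hv, hV] using h'.saving hrefl

end Greedy

section Pairing

lemma exists_isGreatest_saving (hR : ∀ i, R i i) (hS : ∀ s, Saving R s → s ≤ C) :
    ∃ s, IsGreatest {s | Saving R s} s :=
  ⟨Nat.findGreatest (Saving R) C, Nat.findGreatest_spec (Nat.zero_le C) (saving_zero hR),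
    fun s hs ↦ Nat.le_findGreatest (hS s hs) hs⟩

/-- `μ` is a perfect matching of the graph underlying `R`, sending each vertex to its partner. -/
structure IsPairing (R : ι → ι → Prop) (μ : ι → ι) : Prop where
  involutive : Function.Involutive μ
  adj : ∀ i, (SimpleGraph.fromRel R).Adj i (μ i)

variable {μ : ι → ι}

lemma isPairing_restrict (hμ : Function.Involutive μ) {Z : Finset ι} (hZ : ∀ i ∈ Z, μ i ∈ Z)
    (hadj : ∀ i ∈ Z, (SimpleGraph.fromRel R).Adj i (μ i)) :
    IsPairing (fun i j : Z ↦ R i j) fun i ↦ ⟨μ i, hZ i i.2⟩ where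
  involutive i := Subtype.ext (hμ i)
  adj i := by
    have h := hadj i i.2
    rw [SimpleGraph.fromRel_adj] at h ⊢
    exact ⟨fun hi ↦ h.1 (congrArg Subtype.val hi), h.2⟩

lemma IsPairing.saving_one [Nonempty ι] (hR : ∀ i, R i i) (h : IsPairing R μ) : Saving R 1 := by
  obtain ⟨i⟩ := ‹Nonempty ι›
  obtain ⟨hne, hrel | hrel⟩ := (SimpleGraph.fromRel_adj _ _ _).1 (h.adj i)
  exacts [saving_one_of_rel hR hne hrel, saving_one_of_rel hR hne.symm hrel]

lemma IsPairing.exists_invariant_separation [Fintype ι] {k : ℕ} (hR : ∀ i, R i i)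
    (h : IsPairing R μ) (hsep : HasSeparation R k) :
    ∃ X Q : Finset ι, (∀ x ∈ X, ∀ q ∈ Q, ¬ R x q ∧ ¬ R q x) ∧ X.Nonempty ∧ Q.Nonempty ∧
      (∀ i ∈ X, μ i ∈ X) ∧ (∀ i ∈ Q, μ i ∈ Q) ∧ Fintype.card ι ≤ #X + #Q + 2 * k := by
  obtain ⟨X, Q, hXQ, hX, hQ, hrest⟩ := hsep
  have hdisj : Disjoint X Q := disjoint_left.2 fun i hi hq ↦ (hXQ i hi i hq).1 (hR i)
  let inside (Y : Finset ι) : Finset ι := {i ∈ Y | μ i ∈ Y}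
  have inside_invariant (Y : Finset ι) : ∀ i ∈ inside Y, μ i ∈ inside Y := fun i hi ↦ by
    rw [mem_filter] at hi ⊢
    exact ⟨hi.2, by rw [h.involutive]; exact hi.1⟩
  have inside_subset (Y : Finset ι) : inside Y ⊆ Y := filter_subset _ _
  have himage : ((X \ inside X) ∪ (Q \ inside Q)).image μ ⊆ (X ∪ Q)ᶜ := by
    intro j hj
    obtain ⟨i, hi, rfl⟩ := mem_image.1 hj
    have hrel := ((SimpleGraph.fromRel_adj _ _ _).1 (h.adj i)).2
    simp only [inside, mem_union, mem_sdiff, mem_filter, mem_compl] at hi ⊢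
    have houter := fun hx ↦ hXQ i hx (μ i)
    have hinner := fun hx ↦ hXQ (μ i) hx i
    tauto
  have hmoved := card_le_card himage
  rw [card_image_of_injective _ h.involutive.injective, card_union_of_disjoint
    (hdisj.mono sdiff_subset sdiff_subset)] at hmoved
  have hX' := card_sdiff_add_card_eq_card (inside_subset X)
  have hQ' := card_sdiff_add_card_eq_card (inside_subset Q)
  have hcard := card_compl_add_card (X ∪ Q)
  rw [card_union_of_disjoint hdisj] at hcard
  exact ⟨inside X, inside Q,
    fun x hx q hq ↦ hXQ x (inside_subset X hx) q (inside_subset Q hq), card_pos.1 (by omega),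
    card_pos.1 (by omega), inside_invariant X, inside_invariant Q, by omega⟩

lemma expanding_of_not_hasSeparation [Fintype ι] (hR : ∀ i, R i i)
    (hfree : ¬ FreeSaving R (C + 1)) (hsep : ¬ HasSeparation R (2 * C)) :
    Expanding R (4 * C + 1) (4 * C) := by
  intro J hJ
  by_contra! hcon
  rw [card_compl] at hcon
  exact hsep (hasSeparation_of_not_freeSaving (R := Function.swap R) hR (fun h ↦ hfree h.swap) hJ
    (show #(outNeighbors R J) + _ < _ by omega)).swap

-- Savings of the two sides of a separation add up, so the induction on `C` splits `C` among them;
-- without a separation the digraph expands in both directions and the greedy saving applies.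
lemma IsPairing.card_le [Fintype ι] (hR : ∀ i, R i i) (h : IsPairing R μ)
    (hS : ∀ s, Saving R s → s ≤ C) : Fintype.card ι ≤ 28 * C ^ 2 + 7 * C + 1 := by
  induction C using Nat.strong_induction_on generalizing ι with
  | _ C ih =>
  by_cases hsep : HasSeparation R (2 * C)
  · obtain ⟨X, Q, hXQ, hX, hQ, hμX, hμQ, hcard⟩ := h.exists_invariant_separation hR hsep
    have hpair {Z : Finset ι} (hZ : Z.Nonempty) (hμZ : ∀ i ∈ Z, μ i ∈ Z) :
        ∃ s, 1 ≤ s ∧ Saving (fun i j : Z ↦ R i j) s ∧ (s < C → #Z ≤ 28 * s ^ 2 + 7 * s + 1) := by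
      have hpairing := isPairing_restrict h.involutive hμZ fun i _ ↦ h.adj i
      have hRZ (i : Z) : (fun i j : Z ↦ R i j) i i := hR i
      have := hZ.to_subtype
      obtain ⟨s, hs, hmax⟩ := exists_isGreatest_saving (C := C) hRZ
        fun s hs ↦ hS s (hs.map hR (.subtype _))
      exact ⟨s, hmax (hpairing.saving_one hRZ), hs, fun hsC ↦ by
        simpa using ih s hsC hRZ hpairing fun t ht ↦ hmax ht⟩
    obtain ⟨s, hs, hsX, hXcard⟩ := hpair hX hμX
    obtain ⟨t, ht, htQ, hQcard⟩ := hpair hQ hμQ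
    have hst := hS _ (.of_separated hR hXQ hsX htQ)
    have := hXcard (by omega)
    have := hQcard (by omega)
    nlinarith [Nat.mul_le_mul hs ht, Nat.mul_le_mul hst hst]
  · by_contra! hcard
    have hfree : ¬ FreeSaving R (C + 1) := fun hT ↦ by have := hS _ hT.saving; omega
    have : Nonempty ι := Fintype.card_pos_iff.1 (by omega)
    have := hS _ ((expanding_of_not_hasSeparation hR hfree hsep).saving hR
      (expanding_of_not_hasSeparation hR (fun hT ↦ hfree hT.swap) fun h ↦ hsep h.swap)
      (hS 1 (h.saving_one hR)) hcard)
    omega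

lemma exists_perm_adj_isIndepSet [Finite ι] (G : SimpleGraph ι) :
    ∃ σ : Equiv.Perm ι, Function.Involutive σ ∧ (∀ i, σ i ≠ i → G.Adj i (σ i)) ∧
      G.IsIndepSet {i | σ i = i} := by
  cases nonempty_fintype ι
  obtain ⟨σ, hσ, hmax⟩ := exists_max_image
    ({σ | Function.Involutive σ ∧ ∀ i, σ i ≠ i → G.Adj i (σ i)} : Finset (Equiv.Perm ι))
    (fun σ ↦ #σ.support) ⟨1, mem_filter.2 ⟨mem_univ _, fun _ ↦ rfl, by simp⟩⟩
  simp only [mem_filter, mem_univ, true_and] at hσ hmax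
  refine ⟨σ, hσ.1, hσ.2, fun i (hi : σ i = i) j (hj : σ j = j) hij hadj ↦ ?_⟩
  refine (hmax (Equiv.swap i j * σ) ⟨involutive_swap_mul hσ.1 hi hj, fun x hx ↦ ?_⟩).not_gt
    (card_lt_card ((ssubset_iff_of_subset fun x hx ↦ ?_).2
      ⟨i, by simp [hi, hij.symm], by simp [hi]⟩))
  · obtain rfl | hxi := eq_or_ne x i
    · simpa [hi] using hadj
    obtain rfl | hxj := eq_or_ne x j
    · simpa [hj] using hadj.symm
    rw [swap_mul_apply_of_ne hi hj hxi hxj] at hx ⊢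
    exact hσ.2 x hx
  · rw [Equiv.Perm.mem_support] at hx ⊢
    rwa [swap_mul_apply_of_ne hi hj]
    exacts [fun h ↦ hx (h ▸ hi), fun h ↦ hx (h ▸ hj)]

lemma exists_isIndepSet_of_saving_le [Fintype ι] (hR : ∀ i, R i i)
    (hS : ∀ s, Saving R s → s ≤ C) :
    ∃ T : Finset ι, (SimpleGraph.fromRel R).IsIndepSet T ∧
      Fintype.card ι ≤ #T + (28 * C ^ 2 + 7 * C + 1) := by
  obtain ⟨σ, hσ, hadj, hindep⟩ := exists_perm_adj_isIndepSet (SimpleGraph.fromRel R)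
  let K : Finset ι := {i | σ i ≠ i}
  have hpairing := isPairing_restrict hσ (Z := K)
    (fun i hi ↦ by simpa [K, eq_comm, hσ i] using hi) fun i hi ↦ hadj i (by simpa [K] using hi)
  have hRK (i : K) : (fun i j : K ↦ R i j) i i := hR i
  have hK := hpairing.card_le hRK fun s hs ↦ hS s (hs.map hR (.subtype _))
  rw [Fintype.card_coe] at hK
  refine ⟨Kᶜ, by simpa [K] using hindep, ?_⟩
  have := card_compl_add_card K
  omega

end Pairing

end Relation

/-! ### Reversing incomparable pairs -/

section Dimension

open Finset OrderDual

variable {α : Type*} [PartialOrder α] {S : Finset α} {T T' : α → α → Prop} {k k' : ℕ}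

/-- `k` monotone functions suffice to reverse every pair in `T`, where `f` reverses `(x, y)` if
`f y < f x`. Up to breaking ties by a linear extension, such a function is a linear extension. -/
def Reversible (T : α → α → Prop) (k : ℕ) : Prop :=
  ∃ f : Fin k → α →o ℕ, ∀ x y, T x y → ∃ i, f i y < f i x

lemma Reversible.of_fintype {ι : Type*} [Fintype ι] (f : ι → α →o ℕ)
    (h : ∀ x y, T x y → ∃ i, f i y < f i x) : Reversible T (Fintype.card ι) :=
  ⟨fun i ↦ f ((Fintype.equivFin ι).symm i), fun x y hxy ↦
    let ⟨i, hi⟩ := h x y hxy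
    ⟨Fintype.equivFin ι i, by simpa using hi⟩⟩

lemma Reversible.mono (h : Reversible T k) (hT : ∀ x y, T' x y → T x y) (hk : k ≤ k') :
    Reversible T' k' := by
  obtain ⟨f, hf⟩ := h
  refine ⟨fun i ↦ if hi : i < k then f ⟨i, hi⟩ else ⟨fun _ ↦ 0, monotone_const⟩, fun x y hxy ↦ ?_⟩
  obtain ⟨i, hi⟩ := hf x y (hT x y hxy)
  exact ⟨i.castLE hk, by simpa using hi⟩

lemma Reversible.add (h : Reversible T k) (h' : Reversible T' k') :
    Reversible (fun x y ↦ T x y ∨ T' x y) (k + k') := by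
  obtain ⟨f, hf⟩ := h
  obtain ⟨g, hg⟩ := h'
  simpa using Reversible.of_fintype (Sum.elim f g) fun x y ↦ Or.rec
    (fun hxy ↦ (hf x y hxy).imp' .inl fun _ ↦ id) fun hxy ↦ (hg x y hxy).imp' .inr fun _ ↦ id

lemma exists_orderHom_lt_of_lt {β : Type*} [LinearOrder β] {f : α → β}
    (hf : MonotoneOn f S) : ∃ g : α →o ℕ, ∀ x ∈ S, ∀ y ∈ S, f y < f x → g y < g x := by
  classical
  refine ⟨⟨fun x ↦ #{z ∈ S | ∃ w ∈ S, w ≤ x ∧ f z < f w}, fun x x' hx ↦ card_le_card fun z ↦ ?_⟩,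
    fun x hx y hy hyx ↦ card_lt_card ?_⟩
  · simp only [mem_filter]
    exact fun ⟨hz, w, hw, hwx, hzw⟩ ↦ ⟨hz, w, hw, hwx.trans hx, hzw⟩
  · refine (ssubset_iff_of_subset fun z ↦ ?_).2 ⟨y, ?_, ?_⟩ <;> simp only [mem_filter]
    · exact fun ⟨hz, w, hw, hwy, hzw⟩ ↦ ⟨hz, x, hx, le_rfl, (hzw.trans_le (hf hw hy hwy)).trans hyx⟩
    · exact ⟨hy, x, hx, le_rfl, hyx⟩
    · exact fun ⟨_, w, hw, hwy, hyw⟩ ↦ hyw.not_ge (hf hw hy hwy)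

lemma Reversible.of_monotoneOn {ι : Type*} [Fintype ι] {β : ι → Type*} [∀ i, LinearOrder (β i)]
    {f : ∀ i, α → β i} (hf : ∀ i, MonotoneOn (f i) S)
    (h : ∀ x y, T x y → x ∈ S ∧ y ∈ S ∧ ∃ i, f i y < f i x) : Reversible T (Fintype.card ι) := by
  choose g hg using fun i ↦ exists_orderHom_lt_of_lt (hf i)
  refine .of_fintype g fun x y hxy ↦ ?_
  obtain ⟨hx, hy, i, hi⟩ := h x y hxy
  exact ⟨i, hg i x hx y hy hi⟩

lemma Reversible.of_monotoneOn_two {β γ : Type*} [LinearOrder β] [LinearOrder γ] {f : α → β}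
    {g : α → γ} (hf : MonotoneOn f S) (hg : MonotoneOn g S)
    (h : ∀ x y, T x y → x ∈ S ∧ y ∈ S ∧ (f y < f x ∨ g y < g x)) : Reversible T 2 := by
  obtain ⟨f', hf'⟩ := exists_orderHom_lt_of_lt hf
  obtain ⟨g', hg'⟩ := exists_orderHom_lt_of_lt hg
  refine ⟨![f', g'], fun x y hxy ↦ ?_⟩
  obtain ⟨hx, hy, hlt | hlt⟩ := h x y hxy
  exacts [⟨0, hf' x hx y hy hlt⟩, ⟨1, hg' x hx y hy hlt⟩]

/-- `S` has dimension at most `k` as a subposet. -/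
def DimLE (S : Finset α) (k : ℕ) : Prop :=
  Reversible (fun x y ↦ x ∈ S ∧ y ∈ S ∧ Incomp x y) k

lemma DimLE.insert [DecidableEq α] (h : DimLE S (k + 1)) (x : α) :
    DimLE (insert x S) (k + 2) := by
  obtain ⟨f, hf⟩ := h
  let below (z : α) : Prop ×ₗ Prop ×ₗ ℕ := toLex (¬ z ≤ x, toLex (z = x, f 0 z))
  let above (z : α) : Prop ×ₗ Prop ×ₗ ℕ := toLex (x ≤ z, toLex (z ≠ x, f 0 z))
  have hbelow : Monotone below := fun a b hab ↦ by
    have := (f 0).monotone hab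
    simp only [below, Prod.Lex.toLex_le_toLex', le_Prop_eq, eq_iff_iff]
    grind
  have habove : Monotone above := fun a b hab ↦ by
    have := (f 0).monotone hab
    simp only [above, Prod.Lex.toLex_le_toLex', le_Prop_eq, eq_iff_iff]
    grind
  obtain ⟨gb, hgb⟩ := exists_orderHom_lt_of_lt (S := Insert.insert x S) (hbelow.monotoneOn _)
  obtain ⟨ga, hga⟩ := exists_orderHom_lt_of_lt (S := Insert.insert x S) (habove.monotoneOn _)
  refine (Reversible.of_fintype (Sum.elim (fun i : Fin k ↦ f i.succ) ![gb, ga]) ?_).mono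
    (fun _ _ ↦ id) (by simp)
  rintro a b ⟨ha, hb, hab⟩
  obtain hlt | hlt | ⟨i, hlt⟩ :
      below b < below a ∨ above b < above a ∨ ∃ i : Fin k, f i.succ b < f i.succ a := by
    simp only [below, above, Prod.Lex.toLex_lt_toLex', le_Prop_eq, eq_iff_iff]
    by_cases hax : a = x
    · have := hab.1
      grind
    by_cases hbx : b = x
    · have := hab.1
      grind
    obtain ⟨i, hi⟩ := hf a b ⟨mem_of_mem_insert_of_ne ha hax, mem_of_mem_insert_of_ne hb hbx, hab⟩
    induction i using Fin.cases with
    | zero =>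
      have := hab.1
      grind
    | succ i => exact .inr (.inr ⟨i, hi⟩)
  exacts [⟨.inr 0, hgb a ha b hb hlt⟩, ⟨.inr 1, hga a ha b hb hlt⟩, ⟨.inl i, hlt⟩]

lemma dimLE_card_add_one (S : Finset α) : DimLE S (#S + 1) := by
  classical
  induction S using Finset.induction_on with
  | empty => exact ⟨fun _ ↦ ⊥, by simp⟩
  | insert x S hx ih => simpa [card_insert_of_notMem hx] using ih.insert x

/-- The dimension of the subposet `S`; it is positive by convention, as for `dimP`. -/
noncomputable def dimOn (S : Finset α) : ℕ :=
  sInf {k | 0 < k ∧ DimLE S k}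

lemma dimOn_spec (S : Finset α) : 0 < dimOn S ∧ DimLE S (dimOn S) :=
  Nat.sInf_mem (s := {k | 0 < k ∧ DimLE S k}) ⟨_, Nat.succ_pos _, dimLE_card_add_one S⟩

lemma dimOn_le (h : DimLE S k) (hk : 0 < k) : dimOn S ≤ k :=
  Nat.sInf_le ⟨hk, h⟩

lemma dimOn_insert_le [DecidableEq α] (S : Finset α) (x : α) :
    dimOn (insert x S) ≤ dimOn S + 1 := by
  obtain ⟨hpos, h⟩ := dimOn_spec S
  obtain ⟨k, hk⟩ := Nat.exists_eq_add_of_lt hpos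
  rw [hk, zero_add] at h ⊢
  exact dimOn_le (h.insert x) (by omega)

lemma dimOn_union_le [DecidableEq α] (S S' : Finset α) : dimOn (S ∪ S') ≤ dimOn S + #S' := by
  induction S' using Finset.induction_on with
  | empty => simp
  | insert x S' hx ih =>
    rw [union_insert, card_insert_of_notMem hx]
    exact (dimOn_insert_le _ x).trans (by omega)

lemma dimOn_le_sdiff_pair_add_one [DecidableEq α] {d u : α} (hd : ∀ z ∈ S, z ≤ d → z = d)
    (hu : ∀ z ∈ S, u ≤ z → z = u) (hdu : Incomp d u) : dimOn S ≤ dimOn (S \ {d, u}) + 1 := by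
  obtain ⟨hpos, f, hf⟩ := dimOn_spec (S \ {d, u})
  -- Push `d` to the bottom and `u` to the top of the given functions; the last one
  -- puts `d` above and `u` below everything that is incomparable to it.
  let g (i : Option (Fin (dimOn (S \ {d, u})))) (z : α) : Prop ×ₗ Prop ×ₗ ℕ :=
    i.elim (toLex (d ≤ z, toLex (¬ z ≤ u, 0))) fun i ↦ toLex (z ≠ d, toLex (z = u, f i z))
  have : d ≠ u := fun h ↦ hdu.1 h.le
  have hg i : MonotoneOn (g i) S := by
    intro a ha b hb hab
    have := hd a ha
    have := hu b hb
    rcases i with - | i <;> simp only [g, Option.elim, Prod.Lex.toLex_le_toLex', le_Prop_eq,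
      eq_iff_iff]
    · grind
    · have := (f i).monotone hab
      grind
  refine dimOn_le ((Reversible.of_monotoneOn hg ?_).mono (fun _ _ ↦ id) (by simp))
    (Nat.succ_pos _)
  rintro a b ⟨ha, hb, hab⟩
  refine ⟨ha, hb, ?_⟩
  simp only [g, Option.exists, Option.elim, Prod.Lex.toLex_lt_toLex', le_Prop_eq, eq_iff_iff]
  by_cases hmid : a ≠ d ∧ a ≠ u ∧ b ≠ d ∧ b ≠ u
  · obtain ⟨i, hi⟩ := hf a b ⟨by simp [ha, hmid], by simp [hb, hmid], hab⟩
    exact .inr ⟨i, by grind⟩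
  · have := hab.1
    have := hdu.1
    by_cases hlast : a = d ∨ b = u
    · left; grind
    · exact .inr ⟨⟨0, hpos⟩, by grind⟩

lemma dimOn_le_two_of_isAntichain (hS : IsAntichain (· ≤ ·) (S : Set α)) : dimOn S ≤ 2 := by
  have hdual : MonotoneOn (fun x ↦ OrderDual.toDual (toLinearExtension x)) S :=
    fun x hx y hy hxy ↦ (congrArg _ (hS.eq hx hy hxy)).le
  refine dimOn_le
    (.of_monotoneOn_two (f := toLinearExtension) (toLinearExtension.monotone.monotoneOn _) hdual ?_)
    two_pos
  exact fun x y ⟨hx, hy, hxy⟩ ↦ ⟨hx, hy, lt_or_gt_of_ne fun h ↦ hxy.2 (le_of_eq h)⟩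

lemma isLinearExtension_of_injective {β : Type*} [LinearOrder β] {g : α → β} (hg : Monotone g)
    (hinj : Function.Injective g) : IsLinearExtension fun x y ↦ g x ≤ g y where
  left :=
    { refl := fun _ ↦ le_rfl
      trans := fun _ _ _ ↦ le_trans
      antisymm := fun _ _ hxy hyx ↦ hinj (hxy.antisymm hyx)
      total := fun _ _ ↦ le_total _ _ }
  right _ _ hxy := hg hxy

lemma dimP_le_dimOn_univ [Fintype α] : dimP α ≤ dimOn (univ : Finset α) := by
  obtain ⟨hpos, f, hf⟩ := dimOn_spec (univ : Finset α)
  let g i (x : α) : ℕ ×ₗ LinearExtension α := toLex (f i x, toLinearExtension x)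
  have hg i : Monotone (g i) := fun x y hxy ↦
    Prod.Lex.toLex_mono ⟨(f i).monotone hxy, toLinearExtension.monotone hxy⟩
  have hinj i : Function.Injective (g i) := fun x y h ↦ congrArg (fun p ↦ (ofLex p).2) h
  refine Nat.sInf_le ⟨hpos, fun i x y ↦ g i x ≤ g i y,
    fun i ↦ isLinearExtension_of_injective (hg i) (hinj i), fun x y ↦ ⟨fun hxy i ↦ hg i hxy, ?_⟩⟩
  contrapose!
  intro hxy
  by_cases hyx : y ≤ x
  · exact ⟨⟨0, hpos⟩, (hg _ hyx).lt_of_ne fun h ↦ hxy (hinj _ h).ge⟩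
  · obtain ⟨i, hi⟩ := hf x y ⟨mem_univ x, mem_univ y, hxy, hyx⟩
    exact ⟨i, Prod.Lex.toLex_lt_toLex.2 (.inl hi)⟩

lemma RealizerOfSize.orderDual {d : ℕ} (h : RealizerOfSize α d) : RealizerOfSize αᵒᵈ d := by
  obtain ⟨L, hL, hreal⟩ := h
  refine ⟨fun i x y ↦ L i (ofDual y) (ofDual x), fun i ↦ ⟨?_, fun x y hxy ↦ (hL i).2 _ _ hxy⟩,
    fun x y ↦ hreal (ofDual y) (ofDual x)⟩
  have hlin := (hL i).1
  exact
    { refl := fun x ↦ hlin.refl (ofDual x)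
      trans := fun _ _ _ hxy hyz ↦ hlin.trans _ _ _ hyz hxy
      antisymm := fun _ _ hxy hyx ↦ hlin.antisymm _ _ hyx hxy
      total := fun x y ↦ hlin.total (ofDual y) (ofDual x) }

lemma dimP_orderDual : dimP αᵒᵈ = dimP α :=
  congrArg sInf (Set.ext fun _ ↦ and_congr_right fun _ ↦ ⟨.orderDual, .orderDual⟩)

end Dimension

/-! ### Three layers with a middle antichain -/

section Layers

open Finset OrderDual
open scoped Classical

variable {α β : Type*} [PartialOrder α] {D A U : Finset α} {k : ℕ}

/-- The disjoint finite sets `D`, `A` and `U` form three layers, from bottom to top: the middle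
one is an antichain, and no element lies below an element of a lower layer. -/
structure Layered (D A U : Finset α) : Prop where
  isAntichain : IsAntichain (· ≤ ·) (A : Set α)
  not_mid_le_down : ∀ a ∈ A, ∀ d ∈ D, ¬ a ≤ d
  not_up_le_mid : ∀ u ∈ U, ∀ a ∈ A, ¬ u ≤ a
  not_up_le_down : ∀ u ∈ U, ∀ d ∈ D, ¬ u ≤ d

/-- The order by `p`, in which ties are broken by layer and, within `A`, by `t`. -/
noncomputable def layerLex (D A U : Finset α) (p : α → ℕ) (t : α → β) (z : α) :
    ℕ ×ₗ Prop ×ₗ Prop ×ₗ WithBot β :=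
  toLex (p z, toLex (z ∉ D, toLex (z ∈ U, if z ∈ A then t z else ⊥)))

lemma Layered.monotoneOn_layerLex [LinearOrder β] (h : Layered D A U) {p : α → ℕ}
    (hp : Monotone p) (t : α → β) : MonotoneOn (layerLex D A U p t) ↑(D ∪ A ∪ U) := by
  intro x hx y hy hxy
  have := hp hxy
  have hA := h.isAntichain.eq (a := x) (b := y)
  obtain ⟨-, hAD, hUA, hUD⟩ := h
  have hmid : y ∉ D ∨ x ∈ D := by simp only [coe_union, Set.mem_union, mem_coe] at hx; grind
  simp only [layerLex, Prod.Lex.toLex_le_toLex', le_Prop_eq, eq_iff_iff]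
  simp only [coe_union, Set.mem_union, mem_coe] at hx hy hA
  refine ⟨this, fun _ ↦ ⟨by grind, fun _ ↦ ⟨by grind, fun _ ↦ ?_⟩⟩⟩
  by_cases hxA : x ∈ A
  · rw [hA hxA (by grind) hxy]
  · simp [hxA]

lemma Layered.layerLex_lt_of_layer_lt [LinearOrder β] (h : Layered D A U) {p : α → ℕ} {t : α → β}
    {x y : α} (hxy : x ∉ D ∧ y ∈ D ∨ x ∈ U ∧ y ∈ A) (hp : p y ≤ p x) :
    layerLex D A U p t y < layerLex D A U p t x := by
  have hAD := h.not_mid_le_down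
  have hUA := h.not_up_le_mid
  have hUD := h.not_up_le_down
  simp only [layerLex, Prod.Lex.toLex_lt_toLex', le_Prop_eq, eq_iff_iff]
  exact ⟨hp, fun _ ↦ ⟨by grind, fun _ ↦ ⟨by grind, fun _ ↦ by grind⟩⟩⟩

lemma Layered.layerLex_lt_of_mem_mid [LinearOrder β] (h : Layered D A U) {p : α → ℕ} {t : α → β}
    {x y : α} (hx : x ∈ A) (hy : y ∈ A) (hp : p y ≤ p x) (ht : p y = p x → t y < t x) :
    layerLex D A U p t y < layerLex D A U p t x := by
  have hAD := h.not_mid_le_down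
  have hUA := h.not_up_le_mid
  simp only [layerLex, Prod.Lex.toLex_lt_toLex', le_Prop_eq, eq_iff_iff, hx, hy, if_true,
    WithBot.coe_lt_coe]
  exact ⟨hp, fun heq ↦ ⟨by grind, fun _ ↦ ⟨by grind, fun _ ↦ ht heq⟩⟩⟩

omit [PartialOrder α] in
lemma layerLex_lt_of_lt [LinearOrder β] {p : α → ℕ} (t : α → β) {x y : α} (hp : p y < p x) :
    layerLex D A U p t y < layerLex D A U p t x :=
  Prod.Lex.toLex_lt_toLex.2 (.inl hp)

lemma Layered.exists_layerLex_lt (h : Layered D A U) {p q : α → ℕ} {x y : α} (hx : x ∈ A ∪ U)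
    (hy : y ∈ D ∪ A) (hxy : x ≠ y) (hzero : p y = 0 ∨ q y = 0) :
    layerLex D A U p (fun z ↦ toLex (toDual (q z), toLinearExtension z)) y <
        layerLex D A U p (fun z ↦ toLex (toDual (q z), toLinearExtension z)) x ∨
      layerLex D A U q (fun z ↦ toLex (toDual (p z), toDual (toLinearExtension z))) y <
        layerLex D A U q (fun z ↦ toLex (toDual (p z), toDual (toLinearExtension z))) x := by
  by_cases hlayer : x ∉ D ∧ y ∈ D ∨ x ∈ U ∧ y ∈ A
  · exact hzero.imp (fun hy0 ↦ h.layerLex_lt_of_layer_lt hlayer (by omega))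
      fun hy0 ↦ h.layerLex_lt_of_layer_lt hlayer (by omega)
  obtain hp | hp := lt_or_ge (p y) (p x)
  · exact .inl (layerLex_lt_of_lt _ hp)
  obtain hq | hq := lt_or_ge (q y) (q x)
  · exact .inr (layerLex_lt_of_lt _ hq)
  obtain ⟨hxA, hyA⟩ : x ∈ A ∧ y ∈ A := by
    have := h.not_mid_le_down
    have := h.not_up_le_down
    grind
  have hne : toLinearExtension y ≠ toLinearExtension x := hxy.symm
  by_cases hpq : p y = p x ∧ (q x < q y ∨ toLinearExtension y < toLinearExtension x)
  · refine .inl (h.layerLex_lt_of_mem_mid hxA hyA hpq.1.le fun _ ↦ ?_)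
    simp only [Prod.Lex.toLex_lt_toLex, toDual_lt_toDual, toDual_inj]
    grind
  · refine .inr (h.layerLex_lt_of_mem_mid hxA hyA ?_ fun _ ↦ ?_)
    · grind
    simp only [Prod.Lex.toLex_lt_toLex, toDual_lt_toDual, toDual_inj]
    grind

lemma Layered.reversible_two (h : Layered D A U) {p q : α → ℕ} (hp : Monotone p)
    (hq : Monotone q) (hzero : ∀ y ∈ D ∪ A, p y = 0 ∨ q y = 0) :
    Reversible (fun x y ↦ x ∈ D ∪ A ∪ U ∧ y ∈ D ∪ A ∪ U ∧
      (x ≠ y ∧ x ∈ A ∪ U ∧ y ∈ D ∪ A ∨ p y < p x ∨ q y < q x)) 2 := by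
  have hp' := h.monotoneOn_layerLex hp fun z ↦ toLex (toDual (q z), toLinearExtension z)
  have hq' := h.monotoneOn_layerLex hq fun z ↦ toLex (toDual (p z), toDual (toLinearExtension z))
  refine .of_monotoneOn_two hp' hq' ?_
  rintro x y ⟨hx, hy, ⟨hxy, hxAU, hyDA⟩ | hlt | hlt⟩
  · exact ⟨hx, hy, h.exists_layerLex_lt hxAU hyDA hxy (hzero y hyDA)⟩
  · exact ⟨hx, hy, .inl (layerLex_lt_of_lt _ hlt)⟩
  · exact ⟨hx, hy, .inr (layerLex_lt_of_lt _ hlt)⟩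

lemma Layered.exists_monotone_ranks (h : Layered D A U) (u v : α) :
    ∃ p q : α → ℕ, Monotone p ∧ Monotone q ∧ (∀ y ∈ D ∪ A, p y = 0 ∨ q y = 0) ∧
      (∀ x ∈ A ∪ U, ¬ x ≤ u → p u < p x ∨ q u < q x) ∧
      ∀ x ∈ A ∪ U, ¬ x ≤ v → p v < p x ∨ q v < q x := by
  obtain ⟨P, Q, hP, hQ, hQu, hQv, hself, hPQ⟩ : ∃ P Q : α → Prop, Antitone P ∧ Monotone Q ∧
      ¬ Q u ∧ ¬ Q v ∧ (∀ y ∈ D ∪ A, ¬ y ≤ u → ¬ y ≤ v → P y) ∧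
      ∀ x ∈ A ∪ U, P x → Q x ∧ ¬ x ≤ v := by
    refine ⟨fun z ↦ ∃ w ∈ D ∪ A, ¬ w ≤ u ∧ ¬ w ≤ v ∧ z ≤ w,
      fun z ↦ ∃ a ∈ A, ¬ a ≤ u ∧ ¬ a ≤ v ∧ a ≤ z, ?_, ?_, ?_, ?_, ?_, ?_⟩
    · exact fun x y hxy ⟨w, hw, hwu, hwv, hyw⟩ ↦ ⟨w, hw, hwu, hwv, hxy.trans hyw⟩
    · exact fun x y hxy ⟨a, ha, hau, hav, hax⟩ ↦ ⟨a, ha, hau, hav, hax.trans hxy⟩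
    · exact fun ⟨_, _, hau, _, hle⟩ ↦ hau hle
    · exact fun ⟨_, _, _, hav, hle⟩ ↦ hav hle
    · exact fun y hy hyu hyv ↦ ⟨y, hy, hyu, hyv, le_rfl⟩
    · rintro x hx ⟨w, hw, hwu, hwv, hxw⟩
      obtain ⟨hxA, rfl⟩ : x ∈ A ∧ x = w := by
        have := h.isAntichain.eq (a := x) (b := w)
        obtain ⟨-, hAD, hUA, hUD⟩ := h
        grind
      exact ⟨⟨x, hxA, hwu, hwv, le_rfl⟩, hwv⟩
  refine ⟨fun z ↦ if z ≤ u ∨ P z then 0 else 1,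
    fun z ↦ (if z ≤ v then 0 else 1) + if Q z then 1 else 0, ?_, ?_, ?_, ?_, ?_⟩
  · intro x y hxy
    have hPxy : P y → P x := hP hxy
    have hu : y ≤ u → x ≤ u := hxy.trans
    grind
  · intro x y hxy
    have hQxy : Q x → Q y := hQ hxy
    have hv : y ≤ v → x ≤ v := hxy.trans
    grind
  · intro y hy
    have := hself y hy
    have hv : Q y → ¬ y ≤ v := fun hQy hyv ↦ hQv (hQ hyv hQy)
    grind
  · grind
  · grind

lemma Layered.dimOn_le_add_two (h : Layered D A U) (u v : α)
    (hrev : Reversible (fun x y ↦ x ∈ D ∪ A ∪ U ∧ y ∈ D ∪ A ∪ U ∧ Incomp x y ∧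
      (x ∈ D ∨ y ∈ U ∧ y ≠ u ∧ y ≠ v)) k) :
    dimOn (D ∪ A ∪ U) ≤ k + 2 := by
  obtain ⟨p, q, hp, hq, hzero, hu, hv⟩ := h.exists_monotone_ranks u v
  refine dimOn_le ((hrev.add (h.reversible_two hp hq hzero)).mono ?_ le_rfl) (by omega)
  rintro x y ⟨hx, hy, hxy⟩
  have := hxy.1
  have := hu x
  have := hv x
  grind

end Layers

section Bipartite

open Finset OrderDual
open scoped Classical

variable {α : Type*} [PartialOrder α] {A B : Finset α}

lemma reversible_two_of_isAntichain (hA : IsAntichain (· ≤ ·) (A : Set α))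
    (hB : IsAntichain (· ≤ ·) (B : Set α)) (hBA : ∀ b ∈ B, ∀ a ∈ A, ¬ b ≤ a) {p q : α → ℕ}
    (hp : Monotone p) :
    Reversible (fun x y ↦ x ∈ A ∪ B ∧ y ∈ A ∪ B ∧ x ≠ y ∧
      (p y < p x ∨ (x ∈ B ∨ y ∉ B) ∧ (q x < q y ∨ p x = p y ∧ q x = q y))) 2 := by
  let f (x : α) : Prop ×ₗ ℕᵒᵈ ×ₗ LinearExtension α :=
    toLex (x ∈ B, toLex (toDual (q x), toLinearExtension x))
  let g (x : α) : ℕ ×ₗ Prop ×ₗ (LinearExtension α)ᵒᵈ :=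
    toLex (p x, toLex (x ∈ B, toDual (toLinearExtension x)))
  have heq_or x (hx : x ∈ A ∪ B) y (hy : y ∈ A ∪ B) (hxy : x ≤ y) : x = y ∨ x ∉ B ∧ y ∈ B := by
    have := hA.eq (a := x) (b := y)
    have := hB.eq (a := x) (b := y)
    grind
  have hf : MonotoneOn f ↑(A ∪ B) := fun x hx y hy hxy ↦ by
    obtain rfl | ⟨hxB, hyB⟩ := heq_or x hx y hy hxy
    · exact le_rfl
    · simp [f, Prod.Lex.toLex_le_toLex', hxB, hyB]
  have hg : MonotoneOn g ↑(A ∪ B) := fun x hx y hy hxy ↦ by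
    obtain rfl | ⟨hxB, hyB⟩ := heq_or x hx y hy hxy
    · exact le_rfl
    · simp [g, Prod.Lex.toLex_le_toLex', hxB, hyB, hp hxy]
  refine .of_monotoneOn_two hf hg ?_
  rintro x y ⟨hx, hy, hxy, hcase⟩
  have hne : toLinearExtension x ≠ toLinearExtension y := hxy
  refine ⟨hx, hy, ?_⟩
  simp only [f, g, Prod.Lex.toLex_lt_toLex', toDual_lt_toDual, toDual_le_toDual, toDual_inj,
    le_Prop_eq, eq_iff_iff]
  grind

lemma dimLE_union_of_reversible {k : ℕ} (hA : IsAntichain (· ≤ ·) (A : Set α))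
    (hB : IsAntichain (· ≤ ·) (B : Set α)) (hBA : ∀ b ∈ B, ∀ a ∈ A, ¬ b ≤ a)
    (h : Reversible (fun x y ↦ x ∈ A ∧ y ∈ B ∧ ¬ x ≤ y) (k + 1)) : DimLE (A ∪ B) (k + 2) := by
  obtain ⟨f, hf⟩ := h
  have htail : Reversible (fun x y ↦ ∃ i : Fin k, f i.succ y < f i.succ x) k :=
    ⟨fun i ↦ f i.succ, fun _ _ ↦ id⟩
  -- The sum of the `f i` separates two elements that all `f i` order in the same way, unless all
  -- `f i` agree on them.
  refine (htail.add (reversible_two_of_isAntichain hA hB hBA (q := fun x ↦ ∑ i, f i x)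
    (f 0).monotone)).mono ?_ le_rfl
  rintro x y ⟨hx, hy, hxy⟩
  by_cases hex : ∃ i, f i y < f i x
  · obtain hhead | htl := Fin.exists_fin_succ.1 hex
    · exact .inr ⟨hx, hy, fun h ↦ hxy.1 h.le, .inl hhead⟩
    · exact .inl htl
  have hle : ∀ i, f i x ≤ f i y := by simpa using hex
  have hxyB : x ∈ B ∨ y ∉ B := by
    have := hf x y
    have := hxy.1
    grind
  have hsum : ∑ i, f i x < ∑ i, f i y ∨ f 0 x = f 0 y ∧ ∑ i, f i x = ∑ i, f i y :=
    (sum_le_sum fun i _ ↦ hle i).lt_or_eq.imp_right fun h ↦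
      ⟨(sum_eq_sum_iff_of_le fun i _ ↦ hle i).1 h 0 (mem_univ 0), h⟩
  exact .inr ⟨hx, hy, fun h ↦ hxy.1 h.le, .inr ⟨hxyB, hsum⟩⟩

end Bipartite

/-! ### Matchings, covers and chains -/

section Matching

open Finset
open scoped Classical

variable {α β : Type*}

/-- A matching in the bipartite graph `E`, given by its edges. -/
structure IsMatching (E : α → β → Prop) (N : Finset (α × β)) : Prop where
  rel : ∀ e ∈ N, E e.1 e.2
  injOn_fst : Set.InjOn Prod.fst (N : Set (α × β))
  injOn_snd : Set.InjOn Prod.snd (N : Set (α × β))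

lemma IsMatching.subset {E : α → β → Prop} {N N' : Finset (α × β)} (h : IsMatching E N)
    (hN : N' ⊆ N) : IsMatching E N' where
  rel e he := h.rel e (hN he)
  injOn_fst := h.injOn_fst.mono (coe_subset.2 hN)
  injOn_snd := h.injOn_snd.mono (coe_subset.2 hN)

lemma isMatching_empty (E : α → β → Prop) : IsMatching E ∅ where
  rel := by simp
  injOn_fst := by simp
  injOn_snd := by simp

lemma IsMatching.mono {E E' : α → β → Prop} {N : Finset (α × β)} (h : IsMatching E N)
    (hE : ∀ a b, E a b → E' a b) : IsMatching E' N :=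
  ⟨fun e he ↦ hE _ _ (h.rel e he), h.injOn_fst, h.injOn_snd⟩

lemma exists_isMatching_of_injective {γ : Type*} [Fintype γ] {A : Finset α} {f : A → β ⊕ γ}
    (hf : Function.Injective f) :
    ∃ N, IsMatching (fun a b ↦ ∃ ha : a ∈ A, f ⟨a, ha⟩ = .inl b) N ∧
      #A ≤ #N + Fintype.card γ := by
  let N : Finset (α × β) :=
    {e ∈ A ×ˢ (univ.image f).toLeft | ∃ ha : e.1 ∈ A, f ⟨e.1, ha⟩ = .inl e.2}
  have mem_N {e} : e ∈ N ↔ ∃ ha : e.1 ∈ A, f ⟨e.1, ha⟩ = .inl e.2 := by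
    simp only [N, mem_filter, mem_product, mem_toLeft, mem_image, mem_univ, true_and]
    exact and_iff_right_of_imp fun ⟨ha, he⟩ ↦ ⟨ha, _, he⟩
  refine ⟨N, ⟨fun e he ↦ mem_N.1 he, fun e he e' he' h ↦ ?_, fun e he e' he' h ↦ ?_⟩, ?_⟩
  · obtain ⟨ha, he⟩ := mem_N.1 he
    obtain ⟨ha', he'⟩ := mem_N.1 he'
    refine Prod.ext h (Sum.inl_injective (he.symm.trans ?_))
    simp only [← he', h]
  · obtain ⟨ha, he⟩ := mem_N.1 he
    obtain ⟨ha', he'⟩ := mem_N.1 he'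
    exact Prod.ext (congrArg Subtype.val (hf (he.trans ((congrArg _ h).trans he'.symm)))) h
  · have hleft : (univ.image f).toLeft ⊆ N.image Prod.snd := fun b hb ↦ by
      obtain ⟨a, -, ha⟩ := mem_image.1 (mem_toLeft.1 hb)
      exact mem_image.2 ⟨(a, b), mem_N.2 ⟨a.2, ha⟩, rfl⟩
    calc #A = #(univ.image f) := by simp [card_image_of_injective _ hf]
      _ = #(univ.image f).toLeft + #(univ.image f).toRight := card_toLeft_add_card_toRight.symm
      _ ≤ #N + Fintype.card γ :=
        Nat.add_le_add ((card_le_card hleft).trans card_image_le) (card_le_univ _)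

lemma exists_isMatching_of_card_le_add (A : Finset α) (t : α → Finset β) (δ : ℕ)
    (h : ∀ X ⊆ A, #X ≤ #(X.biUnion t) + δ) :
    ∃ N, IsMatching (fun a b ↦ a ∈ A ∧ b ∈ t a) N ∧ #A ≤ #N + δ := by
  -- `δ` dummy neighbours of every vertex reduce to Hall's theorem.
  obtain ⟨f, hinj, hf⟩ := (all_card_le_biUnion_card_iff_exists_injective
    fun a : A ↦ (t a).disjSum (univ : Finset (Fin δ))).1 fun X ↦ by
      obtain rfl | ⟨a, ha⟩ := X.eq_empty_or_nonempty
      · simp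
      calc #X = #(X.map (.subtype _)) := (card_map _).symm
        _ ≤ #((X.map (.subtype _)).biUnion t) + δ := h _ fun a ha ↦ property_of_mem_map_subtype X ha
        _ = #(((X.map (.subtype _)).biUnion t).disjSum (univ : Finset (Fin δ))) := by simp
        _ ≤ _ := card_le_card fun z hz ↦ by
          rcases z with b | z
          · obtain ⟨_, hmap, hb⟩ := mem_biUnion.1 (inl_mem_disjSum.1 hz)
            obtain ⟨a', ha', rfl⟩ := mem_map.1 hmap
            exact mem_biUnion.2 ⟨a', ha', inl_mem_disjSum.2 hb⟩
          · exact mem_biUnion.2 ⟨a, ha, by simp⟩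
  obtain ⟨N, hN, hcard⟩ := exists_isMatching_of_injective hinj
  refine ⟨N, hN.mono fun a b ⟨ha, hab⟩ ↦ ⟨ha, ?_⟩, by simpa using hcard⟩
  have := hf ⟨a, ha⟩
  rwa [hab, inl_mem_disjSum] at this

lemma exists_isMatching_card_cover_le (A : Finset α) (B : Finset β) (E : α → β → Prop) :
    ∃ N, IsMatching (fun a b ↦ a ∈ A ∧ b ∈ B ∧ E a b) N ∧ ∃ A' ⊆ A, ∃ B' ⊆ B,
      (∀ a ∈ A, ∀ b ∈ B, E a b → a ∈ A' ∨ b ∈ B') ∧ #A' + #B' ≤ #N := by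
  let t (a : α) : Finset β := {b ∈ B | E a b}
  obtain ⟨X, hX, hmax⟩ := exists_max_image A.powerset (fun X ↦ (#X : ℤ) - #(X.biUnion t))
    ⟨∅, by simp⟩
  simp only [mem_powerset] at hX hmax
  obtain ⟨δ, hδ⟩ := Int.eq_ofNat_of_zero_le (hmax ∅ (empty_subset A))
  obtain ⟨N, hN, hcard⟩ := exists_isMatching_of_card_le_add A t δ fun Y hY ↦ by
    have := hmax Y hY
    grind
  refine ⟨N, hN.mono fun a b ↦ by simp [t], A \ X, sdiff_subset,
    X.biUnion t, by simp [t], fun a ha b hb hab ↦ ?_, ?_⟩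
  · by_cases haX : a ∈ X
    · exact .inr (mem_biUnion.2 ⟨a, haX, by simp [t, hb, hab]⟩)
    · exact .inl (mem_sdiff.2 ⟨ha, haX⟩)
  · have := card_sdiff_add_card_eq_card hX
    grind

variable [PartialOrder α] {U : Finset α}

lemma exists_isMatching_isAntichain (U : Finset α) :
    ∃ N, IsMatching (fun x y ↦ x ∈ U ∧ y ∈ U ∧ x < y) N ∧
      ∃ B ⊆ U, IsAntichain (· ≤ ·) (B : Set α) ∧ #U ≤ #N + #B := by
  obtain ⟨N, hN, A', -, B', -, hcover, hcard⟩ :=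
    exists_isMatching_card_cover_le U U fun x y ↦ x < y
  refine ⟨N, hN, U \ (A' ∪ B'), sdiff_subset, fun x hx y hy hxy hle ↦ ?_, ?_⟩
  · have := hcover x (by grind) y (by grind) (hle.lt_of_ne hxy)
    grind
  · have := le_card_sdiff (A' ∪ B') U
    have := card_union_le A' B'
    omega

lemma IsMatching.card_le {N : Finset (α × α)}
    (hN : IsMatching (fun x y ↦ x ∈ U ∧ y ∈ U ∧ x < y) N) : #N ≤ #U :=
  card_le_card_of_injOn _ (fun e he ↦ (hN.rel e he).1) hN.injOn_fst

lemma IsMatching.exists_isChain_cover {N : Finset (α × α)}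
    (hN : IsMatching (fun x y ↦ x ∈ U ∧ y ∈ U ∧ x < y) N) :
    ∃ κ : Fin (#U - #N) → Finset α, (∀ t, IsChain (· ≤ ·) (κ t : Set α)) ∧
      ∀ u ∈ U, ∃ t, u ∈ κ t := by
  let r (x y : α) : Prop := (y, x) ∈ N
  have huniq : Relator.RightUnique r := fun x y z hy hz ↦
    congrArg Prod.fst (hN.injOn_snd hy hz rfl)
  have hle {x y} (h : Relation.ReflTransGen r x y) : y ≤ x := by
    induction h with
    | refl => exact le_rfl
    | tail _ h ih => exact (hN.rel _ h).2.2.le.trans ih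
  have hcard : Fintype.card ↥(U \ N.image Prod.fst) = #U - #N := by
    rw [Fintype.card_coe, card_sdiff_of_subset, card_image_of_injOn hN.injOn_fst]
    exact image_subset_iff.2 fun e he ↦ (hN.rel e he).1
  -- Each chain follows the edges of the matching up to an element that is not matched upwards.
  let top := (Fintype.equivFinOfCardEq hcard).symm
  refine ⟨fun t ↦ {x ∈ U | Relation.ReflTransGen r (top t) x}, fun t x hx y hy _ ↦ ?_,
    fun u hu ↦ ?_⟩
  · simp only [mem_coe, mem_filter] at hx hy
    exact (Relation.ReflTransGen.total_of_right_unique huniq hx.2 hy.2).symm.imp hle hle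
  · have hwf : WellFounded fun x y : U ↦ y < x := wellFounded_gt
    have hbelow (v : U) : ∃ t : ↥(U \ N.image Prod.fst), Relation.ReflTransGen r t v := by
      induction v using hwf.induction with
      | _ v ih =>
      by_cases hex : ∃ w, (v.1, w) ∈ N
      · obtain ⟨w, hw⟩ := hex
        obtain ⟨-, hwU, hlt⟩ := hN.rel _ hw
        obtain ⟨t, ht⟩ := ih ⟨w, hwU⟩ hlt
        exact ⟨t, ht.tail hw⟩
      · exact ⟨⟨v, by simpa using hex⟩, .refl⟩
    obtain ⟨t, ht⟩ := hbelow ⟨u, hu⟩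
    exact ⟨top.symm t, by simpa [hu] using ht⟩

lemma Reversible.of_isChain_cover_upper {ι : Type*} [Fintype ι] {κ : ι → Finset α}
    (hκ : ∀ i, IsChain (· ≤ ·) (κ i : Set α)) :
    Reversible (fun x y ↦ (∃ i, y ∈ κ i) ∧ ¬ x ≤ y) (Fintype.card ι) := by
  refine .of_fintype (fun i ↦ ⟨fun z ↦ #{u ∈ κ i | ¬ z ≤ u}, fun z w hzw ↦ card_le_card
    (monotone_filter_right _ fun u _ hzu hwu ↦ hzu (hzw.trans hwu))⟩)
    fun x y ⟨⟨i, hy⟩, hxy⟩ ↦ ⟨i, card_lt_card ?_⟩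
  refine (ssubset_iff_of_subset fun u ↦ ?_).2 ⟨y, by simp [hy, hxy], by simp⟩
  simp only [mem_filter]
  exact fun ⟨hu, hyu⟩ ↦
    ⟨hu, fun hxu ↦ ((hκ i).total hy hu).elim hyu fun huy ↦ hxy (hxu.trans huy)⟩

lemma Reversible.of_isChain_cover_lower {ι : Type*} [Fintype ι] {κ : ι → Finset α}
    (hκ : ∀ i, IsChain (· ≤ ·) (κ i : Set α)) :
    Reversible (fun x y ↦ (∃ i, x ∈ κ i) ∧ ¬ x ≤ y) (Fintype.card ι) := by
  refine .of_fintype (fun i ↦ ⟨fun z ↦ #{u ∈ κ i | u ≤ z}, fun z w hzw ↦ card_le_card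
    (monotone_filter_right _ fun u _ huz ↦ huz.trans hzw)⟩)
    fun x y ⟨⟨i, hx⟩, hxy⟩ ↦ ⟨i, card_lt_card ?_⟩
  refine (ssubset_iff_of_subset fun u ↦ ?_).2 ⟨x, by simp [hx], by simp [hxy]⟩
  simp only [mem_filter]
  exact fun ⟨hu, huy⟩ ↦ ⟨hu, ((hκ i).total hu hx).resolve_right fun hxu ↦ hxy (hxu.trans huy)⟩

lemma IsMatching.reversible_upper {N : Finset (α × α)}
    (hN : IsMatching (fun x y ↦ x ∈ U ∧ y ∈ U ∧ x < y) N) :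
    Reversible (fun x y ↦ y ∈ U ∧ ¬ x ≤ y) (#U - #N) := by
  obtain ⟨κ, hκ, hcover⟩ := hN.exists_isChain_cover
  refine (Reversible.of_isChain_cover_upper hκ).mono (fun x y ⟨hy, hxy⟩ ↦ ⟨hcover y hy, hxy⟩) ?_
  exact (Fintype.card_fin _).le

lemma IsMatching.reversible_lower {N : Finset (α × α)}
    (hN : IsMatching (fun x y ↦ x ∈ U ∧ y ∈ U ∧ x < y) N) :
    Reversible (fun x y ↦ x ∈ U ∧ ¬ x ≤ y) (#U - #N) := by
  obtain ⟨κ, hκ, hcover⟩ := hN.exists_isChain_cover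
  refine (Reversible.of_isChain_cover_lower hκ).mono (fun x y ⟨hx, hxy⟩ ↦ ⟨hcover x hx, hxy⟩) ?_
  exact (Fintype.card_fin _).le

end Matching

section Reduction

open Finset
open scoped Classical

variable {α : Type*} [PartialOrder α] {D A U : Finset α}

lemma Layered.dimOn_add_card_add_card_le (h : Layered D A U) {M N : Finset (α × α)}
    (hM : IsMatching (fun x y ↦ x ∈ D ∧ y ∈ D ∧ x < y) M)
    (hN : IsMatching (fun x y ↦ x ∈ U ∧ y ∈ U ∧ x < y) N) (hU : 2 * #N + 2 ≤ #U) :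
    dimOn (D ∪ A ∪ U) + #M + #N ≤ #D + #U := by
  obtain ⟨u, v, huv, hu, hv⟩ : ∃ u v, u ≠ v ∧
      (u ∈ U ∧ ∀ e ∈ N, e.1 ≠ u ∧ e.2 ≠ u) ∧ v ∈ U ∧ ∀ e ∈ N, e.1 ≠ v ∧ e.2 ≠ v := by
    have hcard : 1 < #(U \ (N.image Prod.fst ∪ N.image Prod.snd)) := by
      have := le_card_sdiff (N.image Prod.fst ∪ N.image Prod.snd) U
      have := card_union_le (N.image Prod.fst) (N.image Prod.snd)
      have : #(N.image Prod.fst) ≤ #N := card_image_le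
      have : #(N.image Prod.snd) ≤ #N := card_image_le
      omega
    obtain ⟨u, hu, v, hv, huv⟩ := one_lt_card.1 hcard
    exact ⟨u, v, huv, by grind, by grind⟩
  have hN' : IsMatching (fun x y ↦ x ∈ U \ {u, v} ∧ y ∈ U \ {u, v} ∧ x < y) N :=
    ⟨fun e he ↦ by have := hN.rel e he; grind, hN.injOn_fst, hN.injOn_snd⟩
  have hcard : #(U \ {u, v}) = #U - 2 := by
    rw [card_sdiff_of_subset (by grind), card_pair huv]
  have hle := h.dimOn_le_add_two u v ((hM.reversible_lower.add hN'.reversible_upper).mono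
    (fun x y ⟨_, _, hxy, hcase⟩ ↦ hcase.imp (⟨·, hxy.1⟩)
      fun ⟨hyU, hyu, hyv⟩ ↦ ⟨by simp [hyU, hyu, hyv], hxy.1⟩) le_rfl)
  have := hM.card_le
  omega

lemma Layered.dimOn_le_card_add_card (h : Layered D A U) (hU : 2 ≤ #U) :
    dimOn (D ∪ A ∪ U) ≤ #D + #U := by
  simpa using h.dimOn_add_card_add_card_le (isMatching_empty _) (isMatching_empty _) (by simpa)

lemma Layered.reversible_triple (h : Layered D A U) (hD : IsAntichain (· ≤ ·) (D : Set α))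
    (hU : IsAntichain (· ≤ ·) (U : Set α)) (hDU : ∀ x ∈ D, ∀ y ∈ U, x ≤ y) {d u v : α}
    (hd : d ∈ D) (hu : u ∈ U) (hv : v ∈ U) (huv : u ≠ v) :
    Reversible (fun x y ↦ x ∈ D ∪ A ∪ U ∧ y ∈ D ∪ A ∪ U ∧ Incomp x y ∧
      (x = d ∨ y = u ∨ y = v)) 2 := by
  let f (z : α) : ℕ :=
    if z ∈ D then if z = d then 2 else 0
    else if z ∈ U then if z = u then 4 else 6
    else if z ≤ v then if z ≤ u then 3 else 5 else if d ≤ z then 3 else 1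
  let g (z : α) : ℕ :=
    if z ∈ D then if z = d then 2 else 0
    else if z ∈ U then if z = v then 4 else if z = u then 6 else 8
    else if z ≤ v then if d ≤ z then 3 else 1 else if z ≤ u then 5 else 7
  have hmono (x) (hx : x ∈ D ∪ A ∪ U) (y) (hy : y ∈ D ∪ A ∪ U) (hxy : x ≤ y) :
      f x ≤ f y ∧ g x ≤ g y := by
    have := hD.eq (a := x) (b := y)
    have := hU.eq (a := x) (b := y)
    have := h.isAntichain.eq (a := x) (b := y)
    obtain ⟨-, hAD, hUA, hUD⟩ := h
    grind
  refine .of_monotoneOn_two (S := D ∪ A ∪ U) (f := f) (g := g)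
    (fun x hx y hy hxy ↦ (hmono x hx y hy hxy).1) (fun x hx y hy hxy ↦ (hmono x hx y hy hxy).2) ?_
  rintro x y ⟨hx, hy, hxy, hcase⟩
  have := hxy.1
  have := h.not_mid_le_down
  have := h.not_up_le_mid
  have := h.not_up_le_down
  refine ⟨hx, hy, ?_⟩
  grind

lemma Layered.reversible_of_card_le (h : Layered D A U) (hD : IsAntichain (· ≤ ·) (D : Set α))
    (hU : IsAntichain (· ≤ ·) (U : Set α)) (hDU : ∀ x ∈ D, ∀ y ∈ U, x ≤ y) {D' U' : Finset α}
    (hD' : D' ⊆ D) (hU' : U' ⊆ U) (hcard : 2 * #D' ≤ #U') :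
    Reversible (fun x y ↦ x ∈ D ∪ A ∪ U ∧ y ∈ D ∪ A ∪ U ∧ Incomp x y ∧
      (x ∈ D' ∨ y ∈ U')) #U' := by
  induction D' using Finset.induction_on generalizing U' with
  | empty =>
    refine ((isMatching_empty _).reversible_upper (U := U')).mono (fun x y hxy ↦ ?_) (by simp)
    simpa [hxy.2.2.1.1] using hxy.2.2.2
  | insert d D' hd ih =>
    rw [card_insert_of_notMem hd] at hcard
    rw [insert_subset_iff] at hD'
    obtain ⟨u, hu, v, hv, huv⟩ := one_lt_card.1 (show 1 < #U' by omega)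
    have hcard' : #(U' \ {u, v}) + 2 = #U' := by
      rw [← card_pair huv]
      exact card_sdiff_add_card_eq_card (by grind)
    have hrec := ih hD'.2 (sdiff_subset.trans hU' : U' \ {u, v} ⊆ U) (by omega)
    refine (hrec.add (h.reversible_triple hD hU hDU hD'.1 (hU' hu) (hU' hv) huv)).mono ?_ hcard'.le
    grind

lemma Layered.subset {D' U' : Finset α} (h : Layered D A U) (hD : D' ⊆ D) (hU : U' ⊆ U) :
    Layered D' A U' where
  isAntichain := h.isAntichain
  not_mid_le_down a ha d hd := h.not_mid_le_down a ha d (hD hd)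
  not_up_le_mid u hu := h.not_up_le_mid u (hU hu)
  not_up_le_down u hu d hd := h.not_up_le_down u (hU hu) d (hD hd)

lemma Layered.dimOn_le_card_add_card_add_two (h : Layered D A U) :
    dimOn (D ∪ A ∪ U) ≤ #D + #U + 2 := by
  have hle : dimOn (A ∪ (D ∪ U)) ≤ dimOn A + #(D ∪ U) := dimOn_union_le A (D ∪ U)
  have := dimOn_le_two_of_isAntichain h.isAntichain
  have := card_union_le D U
  rw [show D ∪ A ∪ U = A ∪ (D ∪ U) by rw [union_comm D A, union_assoc]]
  omega

/-! ### Removing the lower layer -/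

lemma Layered.exists_isAntichain_of_card_le (h : Layered D A U) {x : ℕ}
    (hx : #D + #U ≤ dimOn (D ∪ A ∪ U) + x) (hU : 2 * x + 4 ≤ #U) :
    ∃ D' ⊆ D, ∃ U' ⊆ U, IsAntichain (· ≤ ·) (D' : Set α) ∧ IsAntichain (· ≤ ·) (U' : Set α) ∧
      #D + #U ≤ #D' + #U' + x := by
  obtain ⟨M, hM, D', hD', hD'anti, hDcard⟩ := exists_isMatching_isAntichain D
  obtain ⟨N, hN, U', hU', hU'anti, hUcard⟩ := exists_isMatching_isAntichain U
  obtain ⟨N', hN'N, hN'⟩ := exists_subset_card_eq (min_le_left #N (x + 1))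
  have := h.dimOn_add_card_add_card_le hM (hN.subset hN'N) (by omega)
  exact ⟨D', hD', U', hU', hD'anti, hU'anti, by omega⟩

lemma Layered.exists_forall_le (h : Layered D A U) (hD : IsAntichain (· ≤ ·) (D : Set α))
    (hU : IsAntichain (· ≤ ·) (U : Set α)) :
    ∃ D' ⊆ D, ∃ U' ⊆ U, ∃ s, #D' + s = #D ∧ #U' + s = #U ∧ (∀ x ∈ D', ∀ y ∈ U', x ≤ y) ∧
      dimOn (D ∪ A ∪ U) ≤ dimOn (D' ∪ A ∪ U') + s := by
  induction hn : #U generalizing D U with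
  | zero => exact ⟨D, Subset.rfl, U, Subset.rfl, 0, rfl, hn, by simp [card_eq_zero.1 hn], le_rfl⟩
  | succ n ih =>
    by_cases hle : ∀ x ∈ D, ∀ y ∈ U, x ≤ y
    · exact ⟨D, Subset.rfl, U, Subset.rfl, 0, rfl, hn, hle, le_rfl⟩
    push Not at hle
    obtain ⟨d, hd, u, hu, hdu⟩ := hle
    have hUD := h.not_up_le_down
    have hstep : dimOn (D ∪ A ∪ U) ≤ dimOn (D.erase d ∪ A ∪ U.erase u) + 1 := by
      have hpair := dimOn_le_sdiff_pair_add_one (S := D ∪ A ∪ U) (d := d) (u := u)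
        (fun z hz hzd ↦ ?_) (fun z hz huz ↦ ?_) ⟨hdu, hUD u hu d hd⟩
      · rwa [show (D ∪ A ∪ U) \ {d, u} = D.erase d ∪ A ∪ U.erase u by
          obtain ⟨-, hAD, hUA, -⟩ := h
          ext z
          have := hAD z
          have := hUA u hu z
          grind] at hpair
      · have := hD.eq (a := z) (b := d)
        have := h.not_mid_le_down z
        grind
      · have := hU.eq (a := u) (b := z)
        have := h.not_up_le_mid u hu z
        grind
    obtain ⟨D', hD', U', hU', s, hDs, hUs, hle', hdim⟩ :=
      ih (h.subset (erase_subset d D) (erase_subset u U))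
        (hD.subset (coe_subset.2 (erase_subset d D))) (hU.subset (coe_subset.2 (erase_subset u U)))
        (by rw [card_erase_of_mem hu, hn, Nat.add_sub_cancel])
    have := card_erase_add_one hd
    exact ⟨D', hD'.trans (erase_subset d D), U', hU'.trans (erase_subset u U), s + 1, by omega,
      by omega, hle', by omega⟩

lemma Layered.card_le_of_forall_le (h : Layered D A U) (hD : IsAntichain (· ≤ ·) (D : Set α))
    (hU : IsAntichain (· ≤ ·) (U : Set α)) (hDU : ∀ x ∈ D, ∀ y ∈ U, x ≤ y) {x : ℕ}
    (hx : #D + #U ≤ dimOn (D ∪ A ∪ U) + x) (hcard : 2 * x + 4 ≤ #U) : #D ≤ x := by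
  by_contra! hlt
  obtain ⟨D', hD', hD'card⟩ := exists_subset_card_eq (show x + 1 ≤ #D from hlt)
  obtain ⟨u, hu, v, hv, huv⟩ := one_lt_card.1 (show 1 < #U by omega)
  have hU'card : #(U \ {u, v}) + 2 = #U := by
    rw [← card_pair huv]
    exact card_sdiff_add_card_eq_card (by grind)
  have hDcard := card_sdiff_add_card_eq_card hD'
  have hstars := h.reversible_of_card_le hD hU hDU hD' (sdiff_subset : U \ {u, v} ⊆ U) (by omega)
  have hsingles := (isMatching_empty _).reversible_lower (U := D \ D')
  have := h.dimOn_le_add_two u v ((hstars.add hsingles).mono (fun y z ⟨_, _, hyz, _⟩ ↦ by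
    have := hyz.1
    grind) le_rfl)
  rw [card_empty] at this
  omega

lemma Layered.exists_dimOn_le (h : Layered D A U) {x : ℕ}
    (hx : #D + #U ≤ dimOn (D ∪ A ∪ U) + x) (hU : 4 * x + 4 ≤ #U) :
    ∃ U' ⊆ U, IsAntichain (· ≤ ·) (U' : Set α) ∧ ∃ e ≤ 2 * x, #U' + e ≤ #D + #U ∧
      dimOn (D ∪ A ∪ U) ≤ dimOn (A ∪ U') + e := by
  obtain ⟨D₁, hD₁, U₁, hU₁, hD₁anti, hU₁anti, hcard₁⟩ :=
    h.exists_isAntichain_of_card_le hx (by omega)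
  have h₁ := h.subset hD₁ hU₁
  have hdim₁ : dimOn (D ∪ A ∪ U) ≤ dimOn (D₁ ∪ A ∪ U₁) + (#(D \ D₁) + #(U \ U₁)) := by
    have hle := dimOn_union_le (D₁ ∪ A ∪ U₁) (D \ D₁ ∪ U \ U₁)
    rw [show D₁ ∪ A ∪ U₁ ∪ (D \ D₁ ∪ U \ U₁) = D ∪ A ∪ U by grind] at hle
    have := card_union_le (D \ D₁) (U \ U₁)
    omega
  have := card_sdiff_add_card_eq_card hD₁
  have := card_sdiff_add_card_eq_card hU₁
  have := card_le_card hD₁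
  obtain ⟨D₂, hD₂, U₂, hU₂, s, hD₂card, hU₂card, hle, hdim₂⟩ := h₁.exists_forall_le hD₁anti hU₁anti
  have h₂ := h₁.subset hD₂ hU₂
  have := h₂.dimOn_le_card_add_card_add_two
  have hsx : s ≤ x := by
    have := h₂.dimOn_le_card_add_card (by omega)
    omega
  have hcard₂ : #D₂ ≤ x - s := h₂.card_le_of_forall_le (hD₁anti.subset (coe_subset.2 hD₂))
    (hU₁anti.subset (coe_subset.2 hU₂)) hle (by omega) (by omega)
  have hdim₃ : dimOn (D₂ ∪ A ∪ U₂) ≤ dimOn (A ∪ U₂) + #D₂ := by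
    rw [union_assoc, union_comm]
    exact dimOn_union_le _ _
  exact ⟨U₂, hU₂.trans hU₁, hU₁anti.subset (coe_subset.2 hU₂),
    #(D \ D₁) + #(U \ U₁) + s + #D₂, by omega, by omega, by omega⟩

end Reduction

/-! ### Savings and standard examples -/

section StandardExample

open Finset
open scoped Classical

variable {α ι : Type*} [PartialOrder α] {A B : Finset α} {N : Finset (α × α)} {s : ℕ}

lemma exists_monotone_reversing_left {a a' b : α} (hab : ¬ a ≤ b) (hab' : ¬ a' ≤ b) :
    ∃ f : α → ℕ, Monotone f ∧ (∀ y, ¬ a ≤ y → f y < f a) ∧ (∀ x, ¬ x ≤ b → f b < f x) ∧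
      ∀ y, ¬ a ≤ y → ¬ a' ≤ y → f y < f a' := by
  let f (z : α) : ℕ :=
    if a ≤ z then 3 else if a' ≤ z then 2 else if z ≤ b then 0 else 1
  refine ⟨f, fun x y hxy ↦ ?_, ?_, ?_, ?_⟩
  · have : a ≤ x → a ≤ y := fun h ↦ h.trans hxy
    have : a' ≤ x → a' ≤ y := fun h ↦ h.trans hxy
    have : y ≤ b → x ≤ b := hxy.trans
    grind
  all_goals grind

lemma exists_monotone_reversing_right {a b b' : α} (hab : ¬ a ≤ b) (hab' : ¬ a ≤ b') :
    ∃ f : α → ℕ, Monotone f ∧ (∀ y, ¬ a ≤ y → f y < f a) ∧ (∀ x, ¬ x ≤ b → f b < f x) ∧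
      ∀ x, ¬ x ≤ b → ¬ x ≤ b' → f b' < f x := by
  let f (z : α) : ℕ :=
    if z ≤ b then 0 else if z ≤ b' then 1 else if a ≤ z then 3 else 2
  refine ⟨f, fun x y hxy ↦ ?_, ?_, ?_, ?_⟩
  · have : a ≤ x → a ≤ y := fun h ↦ h.trans hxy
    have : y ≤ b → x ≤ b := hxy.trans
    have : y ≤ b' → x ≤ b' := hxy.trans
    grind
  all_goals grind

lemma exists_monotone_reversing_labelled {a b : ι → α} {i : ι} (hi : ¬ a i ≤ b i) (l : ι ⊕ ι) :
    ∃ f : α → ℕ, Monotone f ∧ (∀ y, ¬ a i ≤ y → f y < f (a i)) ∧ (∀ x, ¬ x ≤ b i → f (b i) < f x) ∧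
      ∀ j j', l = .inl j ∨ l = .inr j' → ¬ a j ≤ b i → ¬ a i ≤ b j' → ¬ a j ≤ b j' →
        f (b j') < f (a j) := by
  rcases l with j | j'
  · by_cases hj : ¬ a j ≤ b i
    · obtain ⟨f, hmono, hf, hf', hf''⟩ := exists_monotone_reversing_left hi hj
      exact ⟨f, hmono, hf, hf', by grind⟩
    · obtain ⟨f, hmono, hf, hf', -⟩ := exists_monotone_reversing_left hi hi
      exact ⟨f, hmono, hf, hf', by grind⟩
  · by_cases hj' : ¬ a i ≤ b j'
    · obtain ⟨f, hmono, hf, hf', hf''⟩ := exists_monotone_reversing_right hi hj'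
      exact ⟨f, hmono, hf, hf', by grind⟩
    · obtain ⟨f, hmono, hf, hf', -⟩ := exists_monotone_reversing_left hi hi
      exact ⟨f, hmono, hf, hf', by grind⟩

lemma Saving.reversible [Fintype ι] {a b : ι → α} (h : Saving (fun i j ↦ ¬ a i ≤ b j) s) :
    Reversible (fun x y ↦ ∃ i j, x = a i ∧ y = b j ∧ ¬ x ≤ y) (Fintype.card ι - s) := by
  obtain ⟨σ, V, w, rfl, hσ, hdetour⟩ := h
  choose f hmono hf hf' hlabel using fun i : ↥Vᶜ ↦
    exists_monotone_reversing_labelled (a := a) (b := b ∘ σ) (hσ i (mem_compl.1 i.2)) (w i)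
  refine (Reversible.of_fintype (fun i ↦ ⟨f i, hmono i⟩) ?_).mono (fun _ _ ↦ id) (by simp)
  rintro _ _ ⟨j, y, rfl, rfl, hjy⟩
  obtain ⟨j', rfl⟩ := σ.surjective y
  by_cases hj : j ∈ V
  · by_cases hj' : j' ∈ V
    · obtain ⟨i, hi, hji, hij', hl⟩ := hdetour j hj j' hj' hjy
      exact ⟨⟨i, mem_compl.2 hi⟩, hlabel _ j j' hl hji hij' hjy⟩
    · exact ⟨⟨j', mem_compl.2 hj'⟩, hf' _ _ hjy⟩
  · exact ⟨⟨j, mem_compl.2 hj⟩, hf _ _ hjy⟩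

lemma containsStdExample_of_le_iff_ne {d : ℕ} {a b : Fin d → α} (h : ∀ i j, a i ≤ b j ↔ i ≠ j)
    (hba : ∀ i j, ¬ b j ≤ a i) : ContainsStdExample α d := by
  have ha {i j} (hij : a i ≤ a j) : i = j := by
    by_contra hne
    exact (h i i).1 (hij.trans ((h j i).2 (Ne.symm hne))) rfl
  have hb {i j} (hij : b i ≤ b j) : i = j := by
    by_contra hne
    exact (h j j).1 (((h j i).2 (Ne.symm hne)).trans hij) rfl
  exact ⟨a, b, fun i j hij ↦ ha hij.le, fun i j hij ↦ hb hij.le, fun i j hij ↦ hba i j hij.ge,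
    fun i j ↦ ⟨fun hlt ↦ (h i j).1 hlt.le, fun hne ↦ ((h i j).2 hne).lt_of_not_ge (hba i j)⟩,
    fun i j hij ↦ ⟨fun hle ↦ hij (ha hle), fun hle ↦ hij (ha hle).symm⟩,
    fun i j hij ↦ ⟨fun hle ↦ hij (hb hle), fun hle ↦ hij (hb hle).symm⟩, hba⟩

lemma containsStdExample_of_isIndepSet {a b : ι → α} (hab : ∀ i, ¬ a i ≤ b i)
    (hba : ∀ i j, ¬ b j ≤ a i) {T : Finset ι}
    (hT : (SimpleGraph.fromRel fun i j ↦ ¬ a i ≤ b j).IsIndepSet T) :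
    ContainsStdExample α #T := by
  let e := T.equivFin.symm
  refine containsStdExample_of_le_iff_ne (a := fun i ↦ a (e i)) (b := fun i ↦ b (e i))
    (fun i j ↦ ⟨?_, fun hij ↦ ?_⟩) fun i j ↦ hba _ _
  · rintro hle rfl
    exact hab _ hle
  · have hne : (e i : ι) ≠ e j := fun h ↦ hij (e.injective (Subtype.ext h))
    by_contra hle
    exact hT (e i).2 (e j).2 hne ⟨hne, .inl hle⟩

lemma containsStdExample_zero : ContainsStdExample α 0 :=
  containsStdExample_of_le_iff_ne (a := Fin.elim0) (b := Fin.elim0) nofun nofun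

lemma dimOn_union_le_of_reversible (hA : IsAntichain (· ≤ ·) (A : Set α))
    (hB : IsAntichain (· ≤ ·) (B : Set α)) (hBA : ∀ b ∈ B, ∀ a ∈ A, ¬ b ≤ a) {k : ℕ}
    (h : Reversible (fun x y ↦ x ∈ A ∧ y ∈ B ∧ ¬ x ≤ y) k) : dimOn (A ∪ B) ≤ max k 1 + 1 := by
  obtain ⟨m, hm⟩ := Nat.exists_eq_add_of_le' (le_max_right k 1)
  rw [hm]
  exact dimOn_le (dimLE_union_of_reversible hA hB hBA (h.mono (fun _ _ ↦ id) (by omega)))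
    (Nat.succ_pos _)

lemma exists_isMatching_dimOn_union_le (hA : IsAntichain (· ≤ ·) (A : Set α))
    (hB : IsAntichain (· ≤ ·) (B : Set α)) (hBA : ∀ b ∈ B, ∀ a ∈ A, ¬ b ≤ a) :
    ∃ N, IsMatching (fun x y ↦ x ∈ A ∧ y ∈ B ∧ ¬ x ≤ y) N ∧ dimOn (A ∪ B) ≤ max #N 1 + 1 := by
  obtain ⟨N, hN, A', -, B', -, hcover, hcard⟩ :=
    exists_isMatching_card_cover_le A B fun x y ↦ ¬ x ≤ y
  have hlower := (isMatching_empty _).reversible_lower (U := A')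
  have hupper := (isMatching_empty _).reversible_upper (U := B')
  refine ⟨N, hN, dimOn_union_le_of_reversible hA hB hBA ((hlower.add hupper).mono ?_ (by simpa))⟩
  exact fun x y ⟨hx, hy, hxy⟩ ↦ (hcover x hx y hy hxy).imp (⟨·, hxy⟩) (⟨·, hxy⟩)

lemma IsMatching.dimOn_union_add_le_of_saving (hA : IsAntichain (· ≤ ·) (A : Set α))
    (hB : IsAntichain (· ≤ ·) (B : Set α)) (hBA : ∀ b ∈ B, ∀ a ∈ A, ¬ b ≤ a)
    (hN : IsMatching (fun x y ↦ x ∈ A ∧ y ∈ B ∧ ¬ x ≤ y) N)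
    (h : Saving (fun e e' : N ↦ ¬ (e : α × α).1 ≤ (e' : α × α).2) s) :
    dimOn (A ∪ B) + 2 * #N ≤ #A + #B + max (#N - s) 1 + 1 := by
  have hA' : N.image Prod.fst ⊆ A := image_subset_iff.2 fun e he ↦ (hN.rel e he).1
  have hB' : N.image Prod.snd ⊆ B := image_subset_iff.2 fun e he ↦ (hN.rel e he).2.1
  have hdim : dimOn (N.image Prod.fst ∪ N.image Prod.snd) ≤ max (#N - s) 1 + 1 := by
    refine dimOn_union_le_of_reversible (hA.subset (coe_subset.2 hA'))
      (hB.subset (coe_subset.2 hB')) (fun b hb a ha ↦ hBA b (hB' hb) a (hA' ha))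
      (h.reversible.mono ?_ (by simp))
    rintro x y ⟨hx, hy, hxy⟩
    obtain ⟨e, he, rfl⟩ := mem_image.1 hx
    obtain ⟨e', he', rfl⟩ := mem_image.1 hy
    exact ⟨⟨e, he⟩, ⟨e', he'⟩, rfl, rfl, hxy⟩
  have hrest := dimOn_union_le (N.image Prod.fst ∪ N.image Prod.snd)
    (A \ N.image Prod.fst ∪ B \ N.image Prod.snd)
  rw [union_union_union_comm, union_sdiff_of_subset hA', union_sdiff_of_subset hB'] at hrest
  have := card_union_le (A \ N.image Prod.fst) (B \ N.image Prod.snd)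
  have hcardA := card_sdiff_add_card_eq_card hA'
  have hcardB := card_sdiff_add_card_eq_card hB'
  rw [card_image_of_injOn hN.injOn_fst] at hcardA
  rw [card_image_of_injOn hN.injOn_snd] at hcardB
  omega

lemma exists_containsStdExample_dimOn_union_le (hA : IsAntichain (· ≤ ·) (A : Set α))
    (hB : IsAntichain (· ≤ ·) (B : Set α)) (hBA : ∀ b ∈ B, ∀ a ∈ A, ¬ b ≤ a) {C : ℕ}
    (hdim : #A + #B + 2 ≤ 2 * dimOn (A ∪ B) + C) :
    ∃ d, dimOn (A ∪ B) ≤ d + (28 * C ^ 2 + 7 * C + 2) ∧ ContainsStdExample α d := by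
  by_cases hsmall : dimOn (A ∪ B) ≤ C + 2
  · exact ⟨0, by omega, containsStdExample_zero⟩
  obtain ⟨N, hN, hNdim⟩ := exists_isMatching_dimOn_union_le hA hB hBA
  have hsaving (s) (hs : Saving (fun e e' : N ↦ ¬ (e : α × α).1 ≤ (e' : α × α).2) s) : s ≤ C := by
    have := hN.dimOn_union_add_le_of_saving hA hB hBA hs
    omega
  obtain ⟨T, hT, hTcard⟩ := exists_isIndepSet_of_saving_le (fun e : N ↦ (hN.rel e e.2).2.2) hsaving
  rw [Fintype.card_coe] at hTcard
  exact ⟨#T, by omega, containsStdExample_of_isIndepSet (fun e : N ↦ (hN.rel e e.2).2.2)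
    (fun e e' ↦ hBA _ (hN.rel e' e'.2).2.1 _ (hN.rel e e.2).1) hT⟩

end StandardExample

section LargeDimension

open Finset OrderDual
open scoped Classical

variable {α : Type*} [PartialOrder α] {D A U : Finset α}

lemma Layered.card_union (h : Layered D A U) : #(D ∪ A ∪ U) = #D + #A + #U := by
  have hDA : Disjoint D A := disjoint_left.2 fun x hD hA ↦ h.not_mid_le_down x hA x hD le_rfl
  have hU : Disjoint (D ∪ A) U := disjoint_right.2 fun x hU hDA ↦ (mem_union.1 hDA).elim
    (fun hD ↦ h.not_up_le_down x hU x hD le_rfl) fun hA ↦ h.not_up_le_mid x hU x hA le_rfl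
  rw [card_union_of_disjoint hU, card_union_of_disjoint hDA]

lemma Layered.orderDual (h : Layered D A U) : Layered (U.map toDual.toEmbedding)
    (A.map toDual.toEmbedding) (D.map toDual.toEmbedding) := by
  refine ⟨?_, ?_, ?_, ?_⟩
  · rw [coe_map]
    rintro _ ⟨x, hx, rfl⟩ _ ⟨y, hy, rfl⟩ hxy hle
    exact hxy (congrArg toDual (h.isAntichain.eq hy hx hle).symm)
  all_goals simp only [forall_mem_map, Equiv.coe_toEmbedding, toDual_le_toDual]
  exacts [fun a ha u hu ↦ h.not_up_le_mid u hu a ha, fun d hd a ha ↦ h.not_mid_le_down a ha d hd,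
    fun d hd u hu ↦ h.not_up_le_down u hu d hd]

lemma layered_of_isAntichain [Fintype α] (hA : IsAntichain (· ≤ ·) (A : Set α)) :
    Layered {x | ∃ a ∈ A, x < a} A {x | x ∉ A ∧ ∀ a ∈ A, ¬ x < a} := by
  refine ⟨hA, ?_, ?_, ?_⟩ <;> simp only [mem_filter, mem_univ, true_and]
  · rintro a ha d ⟨b, hb, hdb⟩ had
    exact (had.trans_lt hdb).ne (hA.eq ha hb (had.trans hdb.le))
  · rintro u ⟨huA, hu⟩ a ha hua
    exact hu a ha (hua.lt_of_ne fun h ↦ huA (h ▸ ha))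
  · rintro u ⟨-, hu⟩ d ⟨b, hb, hdb⟩ hud
    exact hu b hb (hud.trans_lt hdb)

lemma exists_layered_dimOn_univ_le [Fintype α] :
    ∃ D A U : Finset α, Layered D A U ∧ D ∪ A ∪ U = univ ∧
      dimOn (univ : Finset α) ≤ max #A 1 := by
  obtain ⟨N, hN, A, -, hA, hcard⟩ := exists_isMatching_isAntichain (univ : Finset α)
  refine ⟨_, A, _, layered_of_isAntichain hA, ?_, ?_⟩
  · ext x
    simp only [mem_union, mem_filter, mem_univ, true_and]
    grind
  · refine dimOn_le (hN.reversible_upper.mono (fun x y ⟨_, hy, hxy⟩ ↦ ⟨hy, hxy.1⟩) ?_) (by simp)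
    omega

lemma ContainsStdExample.of_orderDual {d : ℕ} (h : ContainsStdExample αᵒᵈ d) :
    ContainsStdExample α d := by
  obtain ⟨a, b, -, -, hne, hlt, -, -, hba⟩ := h
  have hle (i j) : a i ≤ b j ↔ i ≠ j := ⟨fun h ↦ (hlt i j).1 (h.lt_of_ne (hne i j)),
    fun h ↦ ((hlt i j).2 h).le⟩
  exact containsStdExample_of_le_iff_ne (a := fun i ↦ ofDual (b i)) (b := fun i ↦ ofDual (a i))
    (fun i j ↦ (hle j i).trans ne_comm) fun i j ↦ hba j i

lemma Layered.exists_containsStdExample [Fintype α] (h : Layered D A U)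
    (huniv : D ∪ A ∪ U = univ) (hDU : #D ≤ #U) {c n : ℕ} (hA : n ≤ max #A 1 + c)
    (hcard : Fintype.card α ≤ 2 * n + 1) (hdim : n ≤ dimP α + c) :
    ∃ d, n ≤ d + (1008 * c ^ 2 + 1727 * c + 739) ∧ ContainsStdExample α d := by
  by_cases hsmall : n ≤ 17 * c + 17
  · exact ⟨0, by linarith [Nat.zero_le (c ^ 2)], containsStdExample_zero⟩
  have hcard' := h.card_union
  rw [huniv, card_univ] at hcard'
  have hdimOn : n ≤ dimOn (D ∪ A ∪ U) + c := by
    rw [huniv]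
    exact hdim.trans (Nat.add_le_add_right dimP_le_dimOn_univ c)
  have := h.dimOn_le_card_add_card_add_two
  obtain ⟨U', hU', hU'anti, e, he, hUe, hdim'⟩ :=
    h.exists_dimOn_le (x := 2 * c + 1) (by omega) (by omega)
  obtain ⟨d, hd, hex⟩ := exists_containsStdExample_dimOn_union_le (C := 6 * c + 5)
    h.isAntichain hU'anti (fun u hu a ha ↦ h.not_up_le_mid u (hU' hu) a ha) (by omega)
  exact ⟨d, by ring_nf at hd ⊢; omega, hex⟩

end LargeDimension

theorem stmt_18_general (c n : ℕ) (α : Type*) [PartialOrder α] [Fintype α]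
    (hcard : Fintype.card α ≤ 2 * n + 1) (hdim : n ≤ dimP α + c) :
    ∃ d : ℕ, n ≤ d + (1008 * c ^ 2 + 1727 * c + 739) ∧ ContainsStdExample α d := by
  classical
  obtain ⟨D, A, U, h, huniv, hdimA⟩ := exists_layered_dimOn_univ_le (α := α)
  have hA : n ≤ max (Finset.card A) 1 + c :=
    hdim.trans (Nat.add_le_add_right (dimP_le_dimOn_univ.trans hdimA) c)
  obtain hDU | hUD := le_total D.card U.card
  · exact h.exists_containsStdExample huniv hDU hA hcard hdim
  · have huniv' : U.map OrderDual.toDual.toEmbedding ∪ A.map OrderDual.toDual.toEmbedding ∪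
        D.map OrderDual.toDual.toEmbedding = Finset.univ := by
      rw [← Finset.map_union, ← Finset.map_union, Finset.union_comm, Finset.union_comm U,
        ← Finset.union_assoc, huniv, Finset.map_univ_equiv]
    obtain ⟨d, hd, hex⟩ := h.orderDual.exists_containsStdExample huniv' (by simpa) (by simpa)
      (by simpa) (by rwa [dimP_orderDual])
    exact ⟨d, hd, hex.of_orderDual⟩

/-- Main theorem: with `f c = 3485 * c²` (so `f c = O(c²)`), for every positive
integer `c`, if `n > 10 * f c` and `P` is a finite poset with `|P| ≤ 2n + 1` and
`dim P ≥ n − c`, then `P` contains the standard example `S_d` with `d ≥ n − f c`. -/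
theorem stmt_18 (c : ℕ) (hc : 0 < c) (n : ℕ) (hn : 10 * (3485 * c ^ 2) < n)
    (α : Type*) [PartialOrder α] [Fintype α]
    (hcard : Fintype.card α ≤ 2 * n + 1) (hdim : n - c ≤ dimP α) :
    ∃ d : ℕ, n - 3485 * c ^ 2 ≤ d ∧ ContainsStdExample α d := by
  obtain ⟨d, hd, hex⟩ := stmt_18_general c n α hcard (by omega)
  exact ⟨d, Nat.sub_le_iff_le_add.2 (by nlinarith), hex⟩
end

section
/- For every positive integer c, if n > 10(5c + 12) and P = A ∪ B is a bipartite poset with |P| ≤ 2n + 1 and fractional dimension dim*(P) ≥ n − c, then P contains the standard example S_d with d ≥ n − (5c + 12). -/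
open scoped Classical in
/-- `d` is achievable for the fractional dimension: some finitely many linear
extensions carry nonnegative weights summing to `d` so that every incomparable
pair is reversed with total weight at least `1`. -/
def FdimWitness (α : Type*) [PartialOrder α] (d : ℝ) : Prop :=
  ∃ (k : ℕ) (L : Fin k → (α → α → Prop)) (w : Fin k → ℝ),
    (∀ i, IsLinearExtension (L i)) ∧ (∀ i, 0 ≤ w i) ∧ (∑ i, w i = d) ∧
    ∀ x y : α, Incomp x y → 1 ≤ ∑ i, (if L i y x then w i else 0)

/-- The fractional dimension of a finite poset. -/
noncomputable def fdim (α : Type*) [PartialOrder α] : ℝ :=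
  sInf {d : ℝ | FdimWitness α d}

/-!
Join `x ∈ A` and `y ∉ A` by an edge when they are incomparable. A single linear extension can
reverse all edges that meet the endpoints of a given edge, and two further extensions reverse every
remaining incomparable pair, so a family of `N` edges (or vertices) that meets every edge at least
`k` times gives `dim* P ≤ 2 + N / k`.

A maximal matching `M` meets every edge, so `dim* P ≤ 2 + |M|`. Within `M`, choose a maximal set `K`
of disjoint pairs of matching edges `p`, `q` such that `p.1` and `q.2` are also joined; the members
of `M` outside `K` then form an induced matching, which is a standard example of size `|M| - 2|K|`.
The edges of `M`, the edges `(p.1, q.2)` for `(p, q) ∈ K`, the edges of `M` outside `K` and the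
vertices unmatched by `M` together meet every edge twice, and there are `|P| - |K|` of them. Hence
`dim* P ≤ 2 + (|P| - |K|) / 2`, and the two bounds give `|M| - 2|K| ≥ 5 dim* P - 2|P| - 10`.
-/

section Matching

variable {β : Type*} [DecidableEq β] {R : β → β → Prop} {M : Finset (β × β)}

/-- A matching in the directed graph `R`: a finite set of edges no two of which share a vertex.
Edges are ordered pairs because each edge has a designated lower endpoint in the application. -/
structure IsMatching_s19 (R : β → β → Prop) (M : Finset (β × β)) : Prop where
  rel : ∀ p ∈ M, R p.1 p.2
  pairwiseDisjoint : (M : Set (β × β)).PairwiseDisjoint fun p => ({p.1, p.2} : Finset β)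

/-- The set of vertices covered by a set of edges. -/
def matched (M : Finset (β × β)) : Finset β :=
  M.biUnion fun p => {p.1, p.2}

theorem mem_matched {x : β} : x ∈ matched M ↔ ∃ p ∈ M, x ∈ ({p.1, p.2} : Finset β) :=
  Finset.mem_biUnion

theorem exists_maximal_isMatching [Finite β] (R : β → β → Prop) :
    ∃ M : Finset (β × β), Maximal (IsMatching_s19 R) M :=
  (Set.toFinite {M | IsMatching_s19 R M}).exists_maximal ⟨∅, by simp, by simp⟩

theorem IsMatching_s19.card_matched (hM : IsMatching_s19 R M) (hR : ∀ x, ¬ R x x) :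
    (matched M).card = 2 * M.card := by
  have card_edge : ∀ p ∈ M, ({p.1, p.2} : Finset β).card = 2 := fun p hp =>
    Finset.card_pair fun h => hR p.2 (h ▸ hM.rel p hp)
  rw [matched, Finset.card_biUnion hM.pairwiseDisjoint, Finset.sum_const_nat card_edge, mul_comm]

theorem IsMatching_s19.insert (hM : IsMatching_s19 R M) {x y : β} (hxy : R x y)
    (hx : x ∉ matched M) (hy : y ∉ matched M) : IsMatching_s19 R (insert (x, y) M) where
  rel := Finset.forall_mem_insert _ _ _ |>.2 ⟨hxy, hM.rel⟩
  pairwiseDisjoint := by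
    rw [Finset.coe_insert]
    refine hM.pairwiseDisjoint.insert fun p hp _ => ?_
    rw [Finset.disjoint_insert_left, Finset.disjoint_singleton_left]
    exact ⟨fun h => hx (mem_matched.2 ⟨p, hp, h⟩), fun h => hy (mem_matched.2 ⟨p, hp, h⟩)⟩

theorem mem_matched_or_mem_matched_of_maximal (hM : Maximal (IsMatching_s19 R) M) {x y : β}
    (hxy : R x y) : x ∈ matched M ∨ y ∈ matched M := by
  by_contra! h
  have hmem : (x, y) ∈ M :=
    hM.le_of_ge (hM.prop.insert hxy h.1 h.2) (Finset.subset_insert _ _) (Finset.mem_insert_self _ _)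
  exact h.1 (mem_matched.2 ⟨(x, y), hmem, by simp⟩)

variable [Fintype β]

theorem IsMatching_s19.card_compl_matched_add (hM : IsMatching_s19 R M) (hR : ∀ x, ¬ R x x) :
    (matched M)ᶜ.card + 2 * M.card = Fintype.card β := by
  rw [← hM.card_matched hR, Finset.card_compl_add_card]

/-- For a maximal matching `M` and a matching `K` of pairs `p`, `q` of its edges such that
`(p.1, q.2)` is also an edge, a family of vertex sets that meets every edge twice: the edges of `M`,
the edges `(p.1, q.2)` for `(p, q) ∈ K`, a second copy of the edges of `M` outside `K`, and the
vertices that `M` leaves unmatched. -/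
def doubleCover (M : Finset (β × β)) (K : Finset (M × M)) :
    M ⊕ K ⊕ ↥(matched K)ᶜ ⊕ ↥(matched M)ᶜ → Finset β :=
  Sum.elim (fun p => {p.1.1, p.1.2}) <| Sum.elim (fun s => {s.1.1.1.1, s.1.2.1.2}) <|
    Sum.elim (fun p => {p.1.1.1, p.1.1.2}) fun x => {x.1}

theorem exists_inr_mem_doubleCover {K : Finset (M × M)} (p : M) :
    ∃ i, p.1.1 ∈ doubleCover M K (.inr i) ∨ p.1.2 ∈ doubleCover M K (.inr i) := by
  by_cases hp : p ∈ matched K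
  · obtain ⟨s, hs, hps⟩ := mem_matched.1 hp
    refine ⟨.inl ⟨s, hs⟩, ?_⟩
    obtain rfl | rfl : p = s.1 ∨ p = s.2 := by simpa using hps
    · exact Or.inl (by simp [doubleCover])
    · exact Or.inr (by simp [doubleCover])
  · exact ⟨.inr (.inl ⟨p, Finset.mem_compl.2 hp⟩), Or.inl (by simp [doubleCover])⟩

end Matching

section LinearExtension

variable {α : Type*} [PartialOrder α]

theorem isLinearExtension_lex {β γ : Type*} [LinearOrder β] [LinearOrder γ] {level : α → β}
    {tie : α → γ} (hlevel : StrictMono level) (htie : Function.Injective tie) :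
    IsLinearExtension fun x y => toLex (level x, tie x) ≤ toLex (level y, tie y) := by
  refine ⟨{ refl := fun _ => le_rfl, trans := fun _ _ _ => le_trans,
            antisymm := fun x y hxy hyx => htie ?_, total := fun _ _ => le_total _ _ }, ?_⟩
  · exact congrArg Prod.snd (toLex.injective (hxy.antisymm hyx))
  · intro x y hxy
    obtain rfl | hlt := hxy.eq_or_lt
    · exact le_rfl
    · exact Prod.Lex.toLex_le_toLex.2 (Or.inl (hlevel hlt))

theorem toLinearExtension_injective : Function.Injective (toLinearExtension : α → _) :=
  fun _ _ h => h

open scoped Classical in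
theorem fdim_le_sum {ι : Type*} [Fintype ι] {L : ι → α → α → Prop} {w : ι → ℝ}
    (hL : ∀ i, IsLinearExtension (L i)) (hw : ∀ i, 0 ≤ w i)
    (hrev : ∀ x y, Incomp x y → 1 ≤ ∑ i, if L i y x then w i else 0) :
    fdim α ≤ ∑ i, w i := by
  have nonneg_of_witness : ∀ d ∈ {d : ℝ | FdimWitness α d}, 0 ≤ d := by
    rintro _ ⟨k, L, w, -, hw, rfl, -⟩
    exact Finset.sum_nonneg fun i _ => hw i
  let e := (Fintype.equivFin ι).symm
  refine csInf_le ⟨0, nonneg_of_witness⟩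
    ⟨Fintype.card ι, L ∘ e, w ∘ e, fun i => hL _, fun i => hw _, e.sum_comp w, fun x y hxy => ?_⟩
  exact (hrev x y hxy).trans_eq (e.sum_comp fun i => if L i y x then w i else 0).symm

end LinearExtension

/-- The poset is bipartite with lower side `A` and upper side `Aᶜ`. -/
structure IsBipartition {α : Type*} [PartialOrder α] (A : Set α) : Prop where
  isMin : ∀ a ∈ A, IsMin a
  isMax : ∀ b ∉ A, IsMax b

/-- The edges of the bipartite incomparability graph: `x` is on the lower side, `y` is on the upper
side, and they are incomparable. -/
def CrossIncomp {α : Type*} [PartialOrder α] (A : Set α) (x y : α) : Prop :=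
  x ∈ A ∧ y ∉ A ∧ Incomp x y

/-- Some linear extension simultaneously reverses all cross-incomparable pairs that meet `S`. -/
def IsReversible {α : Type*} [PartialOrder α] (A : Set α) (S : Finset α) : Prop :=
  ∃ L : α → α → Prop, IsLinearExtension L ∧ ∀ x y, CrossIncomp A x y → x ∈ S ∨ y ∈ S → L y x

/-- The poset contains the standard example `S_d` with minimal elements in `A` and maximal elements
in `B`. -/
def HasStandardExample {α : Type*} [PartialOrder α] (A B : Set α) (d : ℕ) : Prop :=
  ∃ a b : Fin d → α, Function.Injective a ∧ Function.Injective b ∧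
    (∀ i, a i ∈ A) ∧ (∀ i, b i ∈ B) ∧
    (∀ i j : Fin d, a i < b j ↔ i ≠ j) ∧
    (∀ i : Fin d, Incomp (a i) (b i))

section Bipartite

variable {α : Type*} [PartialOrder α] {A : Set α}

theorem IsBipartition.left_mem_of_lt (hA : IsBipartition A) {x y : α} (hxy : x < y) : x ∈ A :=
  by_contra fun hx => (hA.isMax x hx).not_lt hxy

theorem IsBipartition.right_notMem_of_lt (hA : IsBipartition A) {x y : α} (hxy : x < y) : y ∉ A :=
  fun hy => (hA.isMin y hy).not_lt hxy

theorem not_crossIncomp_self (x : α) : ¬ CrossIncomp A x x :=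
  fun h => h.2.1 h.1

theorem IsBipartition.lt_iff_not_crossIncomp (hA : IsBipartition A) {x y : α} (hx : x ∈ A)
    (hy : y ∉ A) : x < y ↔ ¬ CrossIncomp A x y := by
  have hyx : ¬ y ≤ x := fun h => hy ((hA.isMin x hx).eq_of_le h ▸ hx)
  simp [CrossIncomp, Incomp, hx, hy, hyx, lt_iff_le_not_ge]

theorem IsBipartition.hasStandardExample (hA : IsBipartition A) {ι : Type*} [Fintype ι]
    {a b : ι → α} (h : ∀ i j, CrossIncomp A (a i) (b j) ↔ i = j) :
    HasStandardExample A Aᶜ (Fintype.card ι) := by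
  have hab i : CrossIncomp A (a i) (b i) := (h i i).2 rfl
  have ha : Function.Injective a := fun i j hij => (h i j).1 (hij ▸ hab j)
  have hb : Function.Injective b := fun i j hij => (h i j).1 (hij ▸ hab i)
  let e := (Fintype.equivFin ι).symm
  refine ⟨a ∘ e, b ∘ e, ha.comp e.injective, hb.comp e.injective, fun i => (hab (e i)).1,
    fun i => (hab (e i)).2.1, fun i j => ?_, fun i => (hab (e i)).2.2⟩
  rw [Function.comp_apply, Function.comp_apply,
    hA.lt_iff_not_crossIncomp (hab (e i)).1 (hab (e j)).2.1, h, e.injective.eq_iff]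

open scoped Classical in
/-- The heights of a linear extension that reverses the edges at `a` and at `b`: it puts `b` as low
and `a` as high as the order permits. -/
noncomputable def doubleStarLevel (A : Set α) (a b x : α) : ℕ :=
  if x ∈ A then (if x ≤ b then 0 else if x = a then 4 else 2)
  else (if x = b then 1 else if a ≤ x then 5 else 3)

theorem IsBipartition.strictMono_doubleStarLevel (hA : IsBipartition A) (a b : α) :
    StrictMono (doubleStarLevel A a b) := by
  intro x y hxy
  have hle := hxy.le
  simp only [doubleStarLevel, hA.left_mem_of_lt hxy, hA.right_notMem_of_lt hxy, if_true, if_false]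
  split_ifs <;> first | omega | (subst_vars; contradiction)

theorem doubleStarLevel_lt {a b x y : α} (hab : CrossIncomp A a b) (hxy : CrossIncomp A x y)
    (h : x = a ∨ y = b) : doubleStarLevel A a b y < doubleStarLevel A a b x := by
  have hab_le := hab.2.2.1
  have hxy_le := hxy.2.2.1
  simp only [doubleStarLevel, hxy.1, hxy.2.1, if_true, if_false]
  rcases h with rfl | rfl <;> split_ifs <;> first | omega | contradiction

theorem IsReversible.mono {S T : Finset α} (hT : IsReversible A T) (hST : S ⊆ T) :
    IsReversible A S :=
  let ⟨L, hL, hrev⟩ := hT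
  ⟨L, hL, fun x y hxy h => hrev x y hxy (h.imp (@hST x) (@hST y))⟩

/-- Both extensions put `A` below `Aᶜ`, and they list each side in opposite orders. -/
theorem IsBipartition.exists_two_linearExtensions (hA : IsBipartition A) :
    ∃ L : Bool → α → α → Prop, (∀ s, IsLinearExtension (L s)) ∧
      ∀ x y, (x ∈ A → y ∈ A) → ∃ s, L s y x := by
  classical
  let side (x : α) : ℕ := if x ∈ A then 0 else 1
  have hside : StrictMono side := fun x y hxy => by
    simp [side, hA.left_mem_of_lt hxy, hA.right_notMem_of_lt hxy]
  let tie : α → LinearExtension α := toLinearExtension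
  have htie : Function.Injective tie := toLinearExtension_injective
  refine ⟨fun s x y => bif s then toLex (side x, tie x) ≤ toLex (side y, tie y)
      else toLex (side x, OrderDual.toDual (tie x)) ≤ toLex (side y, OrderDual.toDual (tie y)),
    Bool.forall_bool.2 ⟨isLinearExtension_lex hside (OrderDual.toDual.injective.comp htie),
      isLinearExtension_lex hside htie⟩, fun x y hxy => ?_⟩
  have hle : side y ≤ side x := by
    by_cases hx : x ∈ A
    · simp [side, hx, hxy hx]
    · simp only [side, hx, if_false]; split_ifs <;> simp
  simp only [Bool.exists_bool, cond_false, cond_true, Prod.Lex.toLex_le_toLex,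
    OrderDual.toDual_le_toDual]
  have := le_total (tie x) (tie y)
  have := hle.lt_or_eq
  tauto

open scoped Classical in
theorem IsBipartition.fdim_le_two_add_sum (hA : IsBipartition A) {ι : Type*} [Fintype ι]
    {L : ι → α → α → Prop} {w : ι → ℝ}
    (hL : ∀ i, IsLinearExtension (L i)) (hw : ∀ i, 0 ≤ w i)
    (hrev : ∀ x y, CrossIncomp A x y → 1 ≤ ∑ i, if L i y x then w i else 0) :
    fdim α ≤ 2 + ∑ i, w i := by
  obtain ⟨L₀, hL₀, hrev₀⟩ := hA.exists_two_linearExtensions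
  have nonneg₀ x y : ∀ s ∈ Finset.univ, 0 ≤ if L₀ s y x then (1 : ℝ) else 0 :=
    fun s _ => by positivity
  have nonneg x y : ∀ i ∈ Finset.univ, 0 ≤ if L i y x then w i else 0 :=
    fun i _ => ite_nonneg (hw i) le_rfl
  suffices fdim α ≤ ∑ i : Bool ⊕ ι, Sum.elim (fun _ => 1) w i by simpa using this
  refine fdim_le_sum (L := Sum.elim L₀ L) (Sum.forall.2 ⟨hL₀, hL⟩)
    (Sum.forall.2 ⟨fun _ => zero_le_one, hw⟩) fun x y hxy => ?_
  simp only [Fintype.sum_sum_type, Sum.elim_inl, Sum.elim_inr]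
  by_cases hcross : CrossIncomp A x y
  · exact le_add_of_nonneg_of_le (Finset.sum_nonneg (nonneg₀ x y)) (hrev x y hcross)
  · obtain ⟨s, hs⟩ := hrev₀ x y fun hx => by_contra fun hy => hcross ⟨hx, hy, hxy⟩
    have one_le := (if_pos hs).ge.trans (Finset.single_le_sum (nonneg₀ x y) (Finset.mem_univ s))
    exact le_add_of_le_of_nonneg one_le (Finset.sum_nonneg (nonneg x y))

theorem IsBipartition.isReversible_pair [DecidableEq α] (hA : IsBipartition A) {a b : α}
    (hab : CrossIncomp A a b) : IsReversible A {a, b} := by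
  refine ⟨_, isLinearExtension_lex (hA.strictMono_doubleStarLevel a b) toLinearExtension_injective,
    fun x y hxy h => Prod.Lex.toLex_le_toLex.2 (Or.inl (doubleStarLevel_lt hab hxy ?_))⟩
  have hxb : x ≠ b := fun h => hab.2.1 (h ▸ hxy.1)
  have hya : y ≠ a := fun h => hxy.2.1 (h ▸ hab.1)
  simpa [hxb, hya] using h

theorem IsBipartition.isReversible_singleton (hA : IsBipartition A) (z : α) :
    IsReversible A {z} := by
  classical
  by_cases hz : ∃ x y, CrossIncomp A x y ∧ z ∈ ({x, y} : Finset α)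
  · obtain ⟨x, y, hxy, hz⟩ := hz
    exact (hA.isReversible_pair hxy).mono (Finset.singleton_subset_iff.2 hz)
  · -- No edge meets `z`, so any linear extension will do.
    refine ⟨_, isLinearExtension_lex (hA.strictMono_doubleStarLevel z z)
      toLinearExtension_injective, fun x y hxy h => (hz ⟨x, y, hxy, ?_⟩).elim⟩
    simpa [eq_comm] using h

theorem IsBipartition.fdim_le_two_add_card_div [DecidableEq α] (hA : IsBipartition A)
    {ι : Type*} [Fintype ι] {S : ι → Finset α} (hS : ∀ i, IsReversible A (S i)) {k : ℕ} (hk : 0 < k)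
    (hcover : ∀ x y, CrossIncomp A x y →
      k ≤ (Finset.univ.filter fun i => x ∈ S i ∨ y ∈ S i).card) :
    fdim α ≤ 2 + Fintype.card ι / k := by
  classical
  choose L hL hrev using hS
  have hk' : (0 : ℝ) < k := Nat.cast_pos.2 hk
  suffices fdim α ≤ 2 + ∑ _i : ι, (1 / k : ℝ) by simpa [div_eq_mul_inv] using this
  refine hA.fdim_le_two_add_sum hL (fun _ => by positivity) fun x y hxy => ?_
  have hcard : k ≤ (Finset.univ.filter fun i => L i y x).card :=
    (hcover x y hxy).trans (Finset.card_le_card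
      (Finset.monotone_filter_right _ fun i _ h => hrev i x y hxy h))
  rw [← Finset.sum_filter, Finset.sum_const, nsmul_eq_mul, mul_one_div, one_le_div hk']
  exact_mod_cast hcard

end Bipartite

section MaximalMatching

variable {α : Type*} [PartialOrder α] {A : Set α} {M : Finset (α × α)}

/-- The obstruction to a set of edges `M` being an induced matching: distinct edges `p` and `q` of
`M` for which `(p.1, q.2)` is an edge as well. -/
def IsCrossing (A : Set α) (M : Finset (α × α)) (p q : M) : Prop :=
  p ≠ q ∧ CrossIncomp A p.1.1 q.1.2

theorem not_isCrossing_self (p : M) : ¬ IsCrossing A M p p :=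
  fun h => h.1 rfl

variable [DecidableEq α]

theorem IsBipartition.fdim_le_two_add_card_of_maximal (hA : IsBipartition A)
    (hM : Maximal (IsMatching_s19 (CrossIncomp A)) M) : fdim α ≤ 2 + M.card := by
  have hcover := hA.fdim_le_two_add_card_div (S := fun p : M => {p.1.1, p.1.2})
    (fun p => hA.isReversible_pair (hM.prop.rel p p.2)) one_pos fun x y hxy => ?_
  · simpa using hcover
  · rw [Nat.one_le_iff_ne_zero, Finset.card_ne_zero]
    obtain h | h := mem_matched_or_mem_matched_of_maximal hM hxy <;>
      obtain ⟨p, hp, hpx⟩ := mem_matched.1 h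
    · exact ⟨⟨p, hp⟩, Finset.mem_filter.2 ⟨Finset.mem_univ _, Or.inl hpx⟩⟩
    · exact ⟨⟨p, hp⟩, Finset.mem_filter.2 ⟨Finset.mem_univ _, Or.inr hpx⟩⟩

variable {K : Finset (M × M)}

theorem IsBipartition.hasStandardExample_of_maximal (hA : IsBipartition A)
    (hM : IsMatching_s19 (CrossIncomp A) M) (hK : Maximal (IsMatching_s19 (IsCrossing A M)) K) :
    HasStandardExample A Aᶜ (matched K)ᶜ.card := by
  have hinduced (p q : ↥(matched K)ᶜ) : CrossIncomp A p.1.1.1 q.1.1.2 ↔ p = q := by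
    refine ⟨fun h => by_contra fun hpq => ?_, fun h => h ▸ hM.rel p p.1.2⟩
    exact (mem_matched_or_mem_matched_of_maximal hK ⟨Subtype.coe_injective.ne hpq, h⟩).elim
      (Finset.mem_compl.1 p.2) (Finset.mem_compl.1 q.2)
  simpa only [Fintype.card_coe] using hA.hasStandardExample hinduced

variable [Fintype α]

theorem IsBipartition.isReversible_doubleCover (hA : IsBipartition A)
    (hM : IsMatching_s19 (CrossIncomp A) M) (hK : IsMatching_s19 (IsCrossing A M) K) :
    ∀ i, IsReversible A (doubleCover M K i)
  | .inl p => hA.isReversible_pair (hM.rel p p.2)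
  | .inr (.inl s) => hA.isReversible_pair (hK.rel s s.2).2
  | .inr (.inr (.inl p)) => hA.isReversible_pair (hM.rel p p.1.2)
  | .inr (.inr (.inr x)) => hA.isReversible_singleton x

theorem two_le_card_filter_mem_doubleCover (hM : Maximal (IsMatching_s19 (CrossIncomp A)) M) {x y : α}
    (hxy : CrossIncomp A x y) :
    2 ≤ (Finset.univ.filter fun i => x ∈ doubleCover M K i ∨ y ∈ doubleCover M K i).card := by
  suffices ∃ i j, i ≠ j ∧ (x ∈ doubleCover M K i ∨ y ∈ doubleCover M K i) ∧
      (x ∈ doubleCover M K j ∨ y ∈ doubleCover M K j) by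
    obtain ⟨i, j, hij, hi, hj⟩ := this
    exact Finset.one_lt_card_iff.2 ⟨i, j, by simpa using hi, by simpa using hj, hij⟩
  have exists_inl {z} (hz : z ∈ matched M) : ∃ p : M, z ∈ doubleCover M K (.inl p) := by
    obtain ⟨p, hp, hz⟩ := mem_matched.1 hz
    exact ⟨⟨p, hp⟩, hz⟩
  have mem_unmatched {z} (hz : z ∉ matched M) :
      z ∈ doubleCover M K (.inr (.inr (.inr ⟨z, Finset.mem_compl.2 hz⟩))) :=
    Finset.mem_singleton_self z
  by_cases hx : x ∈ matched M
  · obtain ⟨p, hp⟩ := exists_inl hx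
    by_cases hy : y ∈ matched M
    · obtain ⟨q, hq⟩ := exists_inl hy
      by_cases hpq : p = q
      · subst hpq
        have hpM := hM.prop.rel p p.2
        obtain rfl : x = p.1.1 := (Finset.mem_insert.1 hp).resolve_right fun h =>
          hpM.2.1 (Finset.mem_singleton.1 h ▸ hxy.1)
        obtain rfl : y = p.1.2 := Finset.mem_singleton.1 <| (Finset.mem_insert.1 hq).resolve_left
          fun h => hxy.2.1 (h ▸ hpM.1)
        obtain ⟨i, hi⟩ := exists_inr_mem_doubleCover (K := K) p
        exact ⟨.inl p, .inr i, Sum.inl_ne_inr, Or.inl hp, hi⟩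
      · exact ⟨.inl p, .inl q, Sum.inl_injective.ne hpq, Or.inl hp, Or.inr hq⟩
    · exact ⟨.inl p, _, Sum.inl_ne_inr, Or.inl hp, Or.inr (mem_unmatched hy)⟩
  · obtain ⟨q, hq⟩ :=
      exists_inl ((mem_matched_or_mem_matched_of_maximal hM hxy).resolve_left hx)
    exact ⟨.inl q, _, Sum.inl_ne_inr, Or.inr hq, Or.inl (mem_unmatched hx)⟩

theorem IsBipartition.fdim_le_two_add_card_sub_div_two (hA : IsBipartition A)
    (hM : Maximal (IsMatching_s19 (CrossIncomp A)) M) (hK : IsMatching_s19 (IsCrossing A M) K) :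
    fdim α ≤ 2 + (Fintype.card α - K.card) / 2 := by
  have hbound := hA.fdim_le_two_add_card_div (hA.isReversible_doubleCover hM.prop hK) two_pos
    fun x y hxy => two_le_card_filter_mem_doubleCover hM hxy
  have hunmatched := hM.prop.card_compl_matched_add not_crossIncomp_self
  have huncrossed := hK.card_compl_matched_add not_isCrossing_self
  simp only [Fintype.card_sum, Fintype.card_coe] at hbound huncrossed
  rify at hbound hunmatched huncrossed
  linarith

end MaximalMatching

theorem stmt_19_general {α : Type*} [PartialOrder α] [Fintype α] {A : Set α}
    (hA : IsBipartition A) :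
    ∃ d : ℕ, 5 * fdim α - 2 * Fintype.card α - 10 ≤ d ∧ HasStandardExample A Aᶜ d := by
  classical
  obtain ⟨M, hM⟩ := exists_maximal_isMatching (CrossIncomp A)
  obtain ⟨K, hK⟩ := exists_maximal_isMatching (IsCrossing A M)
  refine ⟨(matched K)ᶜ.card, ?_, hA.hasStandardExample_of_maximal hM.prop hK⟩
  have hM_large := hA.fdim_le_two_add_card_of_maximal hM
  have hK_small := hA.fdim_le_two_add_card_sub_div_two hM hK.prop
  have huncrossed := hK.prop.card_compl_matched_add not_isCrossing_self
  rw [Fintype.card_coe] at huncrossed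
  rify at huncrossed
  linarith

/-- For every positive integer `c`, if `n > 10(5c + 12)` and `P = A ∪ B` is a finite
bipartite poset with `|P| ≤ 2n + 1` and fractional dimension `dim* P ≥ n − c`, then
`P` contains the standard example `S_d` with `d ≥ n − (5c + 12)`. -/
theorem stmt_19 (c : ℕ) (hc : 0 < c) (n : ℕ) (hn : 10 * (5 * c + 12) < n)
    (α : Type*) [PartialOrder α] [Fintype α] (A B : Set α)
    (hA : ∀ a ∈ A, IsMin a) (hB : ∀ b ∈ B, IsMax b)
    (hcover : A ∪ B = Set.univ) (hdisj : Disjoint A B)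
    (hcard : Fintype.card α ≤ 2 * n + 1)
    (hdim : (n : ℝ) - c ≤ fdim α) :
    ∃ d : ℕ, n - (5 * c + 12) ≤ d ∧
      ∃ a b : Fin d → α, Function.Injective a ∧ Function.Injective b ∧
        (∀ i, a i ∈ A) ∧ (∀ i, b i ∈ B) ∧
        (∀ i j : Fin d, a i < b j ↔ i ≠ j) ∧
        (∀ i : Fin d, Incomp (a i) (b i)) := by
  obtain rfl : Aᶜ = B := IsCompl.compl_eq ⟨hdisj, codisjoint_iff.2 hcover⟩
  obtain ⟨d, hd, hS⟩ := stmt_19_general ⟨hA, hB⟩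
  refine ⟨d, Nat.sub_le_of_le_add ?_, hS⟩
  rify at hcard ⊢
  linarith
end
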